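/- arXiv:1609.01213 — 4 statements merged into one kernel-verified Lean document; each statement's English description precedes it below -/
import Mathlib

section
/- Let p be prime and k ∈ ℕ relatively prime to p. If M, n ∈ ℕ satisfy that the sum of the base-p^n digits of k is at most M and (M−1) ∣ (p^n − 1), then every polynomial over an algebraically closed field of characteristic p is a sum of at most 2(M−1) + [γ_{p^n}(k) = M] k-th powers, i.e. v(p,k) ≤ 2(M−1) + [γ_{p^n}(k) = M]. -/
noncomputable def waring (F : Type*) [Field F] (k : ℕ) : ℕ∞ :=
  sInf {s : ℕ∞ | ∃ n : ℕ, s = n ∧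
    ∀ f : Polynomial F, ∃ y : Fin n → Polynomial F, f = ∑ i, y i ^ k}

open Polynomial

/-- `f` is a sum of `N` `k`-th powers. -/
def SumK {F : Type*} [Field F] (k N : ℕ) (f : F[X]) : Prop :=
  ∃ y : Fin N → F[X], f = ∑ i, y i ^ k

theorem SumK.add {F : Type*} [Field F] {k a b : ℕ} {f g : F[X]}
    (hf : SumK k a f) (hg : SumK k b g) : SumK k (a + b) (f + g) := by
  obtain ⟨y, rfl⟩ := hf
  obtain ⟨z, rfl⟩ := hg
  exact ⟨Fin.append y z, by simp [Fin.sum_univ_add]⟩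

theorem SumK.of_sum {F : Type*} [Field F] [IsAlgClosed F] {k k' m : ℕ} (hk : 0 < k)
    (hkk : k ∣ k') (a : ℕ → F) (z : ℕ → F[X]) :
    SumK k m (∑ i ∈ Finset.range m, C (a i) * z i ^ k') := by
  obtain ⟨l, rfl⟩ := hkk
  have : ∀ i, ∃ b : F, b ^ k = a i := fun i => IsAlgClosed.exists_pow_nat_eq (a i) hk
  choose b hb using this
  refine ⟨fun i => C (b i) * z i ^ l, ?_⟩
  rw [Finset.sum_range]
  refine Finset.sum_congr rfl fun i _ => ?_
  rw [mul_pow, ← C_pow, hb, ← pow_mul, mul_comm l k]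

theorem coeff_prod_one {R ι : Type*} [CommRing R] (s : Finset ι) (w : ι → R) :
    (∏ i ∈ s, (1 + C (w i) * X)).coeff 0 = 1 ∧
    (∏ i ∈ s, (1 + C (w i) * X)).coeff 1 = ∑ i ∈ s, w i := by
  classical
  induction s using Finset.induction_on with
  | empty => simp [coeff_one]
  | insert i s hi ih =>
    rw [Finset.prod_insert hi, Finset.sum_insert hi]
    obtain ⟨h0, h1⟩ := ih
    constructor
    · rw [add_mul, one_mul, coeff_add, mul_assoc, coeff_C_mul, coeff_X_mul_zero, h0]; simp
    · rw [add_mul, one_mul, coeff_add, mul_assoc, coeff_C_mul, coeff_X_mul, h0, h1]; ring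

/-- The root of unity filter. -/
theorem filter_sum {F R : Type*} [Field F] [CommRing R] [Algebra F R] {m : ℕ} (hm : 0 < m)
    {ζ : F} (hζ : IsPrimitiveRoot ζ m) (P : R[X]) (hP : P.natDegree ≤ m + 1) :
    ∃ c : F, ∑ i ∈ Finset.range m, algebraMap F R ((ζ ^ i) ^ (m - 1)) *
        P.eval (algebraMap F R (ζ ^ i)) =
      algebraMap F R c * P.coeff 0 + m * P.coeff 1 + m * P.coeff (m + 1) := by
  have key : ∀ l, ¬ m ∣ (m - 1 + l) → ∑ i ∈ Finset.range m, (ζ ^ i) ^ (m - 1 + l) = 0 := by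
    intro l hl
    have h1 : ζ ^ (m - 1 + l) ≠ 1 := fun h => hl (hζ.dvd_of_pow_eq_one _ h)
    have h2 := geom_sum_mul (ζ ^ (m - 1 + l)) m
    rw [← pow_mul, mul_comm _ m, pow_mul, hζ.pow_eq_one, one_pow, sub_self] at h2
    have h3 := (mul_eq_zero.mp h2).resolve_right (sub_ne_zero.mpr h1)
    rw [← h3]
    refine Finset.sum_congr rfl fun i _ => ?_
    rw [← pow_mul, ← pow_mul, mul_comm]
  have key1 : ∀ l, m ∣ (m - 1 + l) → ∑ i ∈ Finset.range m, (ζ ^ i) ^ (m - 1 + l) = m := by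
    rintro l ⟨e, he⟩
    rw [he]
    have : ∀ i ∈ Finset.range m, (ζ ^ i) ^ (m * e) = 1 := by
      intro i _
      rw [← pow_mul, mul_left_comm, pow_mul, hζ.pow_eq_one, one_pow]
    rw [Finset.sum_congr rfl this]; simp
  refine ⟨∑ i ∈ Finset.range m, (ζ ^ i) ^ (m - 1), ?_⟩
  have h1 : ∑ i ∈ Finset.range m, algebraMap F R ((ζ ^ i) ^ (m - 1)) *
        P.eval (algebraMap F R (ζ ^ i)) =
      ∑ l ∈ Finset.range (m + 2), algebraMap F R (∑ i ∈ Finset.range m, (ζ ^ i) ^ (m - 1 + l)) *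
        P.coeff l := by
    have : ∀ i, P.eval (algebraMap F R (ζ ^ i)) =
        ∑ l ∈ Finset.range (m + 2), P.coeff l * (algebraMap F R (ζ ^ i)) ^ l := fun i =>
      eval_eq_sum_range' (by omega) _
    simp_rw [this, Finset.mul_sum, map_sum, Finset.sum_mul]
    rw [Finset.sum_comm]
    refine Finset.sum_congr rfl fun l _ => Finset.sum_congr rfl fun i _ => ?_
    rw [pow_add, map_mul, map_pow (algebraMap F R) (ζ ^ i) l]; ring
  rw [h1, Finset.sum_range_succ, Finset.sum_range_succ', key1 (m + 1) ⟨2, by omega⟩]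
  obtain ⟨m', rfl⟩ : ∃ m', m = m' + 1 := ⟨m - 1, by omega⟩
  rw [Finset.sum_range_succ', key1 (0 + 1) ⟨1, by omega⟩, Finset.sum_eq_zero]
  · simp only [map_natCast, add_zero, zero_add]; ring
  · intro l hl
    rw [key, map_zero, zero_mul]
    rintro ⟨e, he⟩
    have hl' := Finset.mem_range.mp hl
    rcases e with _ | _ | e
    · omega
    · omega
    · have : (m' + 1) * (e + 1 + 1) = (m' + 1) * e + 2 * (m' + 1) := by ring
      have h0 : 0 ≤ (m' + 1) * e := Nat.zero_le _
      omega

/-- One block of `m` powers. -/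
theorem block {F : Type*} [Field F] (p : ℕ) [Fact p.Prime] [CharP F p] {n m J : ℕ} (hm : 0 < m)
    (hdvd : m ∣ p ^ n - 1) {ζ : F} (hζ : IsPrimitiveRoot ζ m) (d e : Fin J → ℕ)
    (hd : ∑ j, d j ≤ m + 1) (ρ : F) :
    ∃ c κ : F, (∑ j, d j ≠ m + 1 → κ = 0) ∧
      ∑ i ∈ Finset.range m, C ((ζ ^ i) ^ (m - 1)) *
        (1 + C (ζ ^ i * ρ) * X) ^ (∑ j, d j * (p ^ n) ^ e j) =
      C c + (m : F[X]) * ∑ j, (d j : F[X]) * (C ρ * X) ^ ((p ^ n) ^ e j)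
        + C κ * X ^ (∑ j, d j * (p ^ n) ^ e j) := by
  set q := p ^ n with hq
  have hq0 : 0 < q := pow_pos (Fact.out : p.Prime).pos n
  let w : (Σ j : Fin J, Fin (d j)) → F[X] := fun i => (C ρ * X) ^ (q ^ e i.1)
  let P : F[X][X] := ∏ i, (1 + C (w i) * X)
  have hcard : Fintype.card (Σ j : Fin J, Fin (d j)) = ∑ j, d j := by simp
  have hdeg1 : ∀ i, (1 + C (w i) * X : F[X][X]).natDegree ≤ 1 := by
    intro i; compute_degree
  have hdeg : P.natDegree ≤ ∑ j, d j := by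
    refine (natDegree_prod_le _ _).trans ?_
    refine (Finset.sum_le_sum fun i _ => hdeg1 i).trans ?_
    rw [← hcard]; simp
  obtain ⟨c, hc⟩ := filter_sum (R := F[X]) hm hζ P (hdeg.trans hd)
  have h0 : P.coeff 0 = 1 := (coeff_prod_one _ w).1
  have h1 : P.coeff 1 = ∑ j, (d j : F[X]) * (C ρ * X) ^ (q ^ e j) := by
    rw [(coeff_prod_one _ w).2, Fintype.sum_sigma]
    simp [w]
  have hζq : ∀ i, (ζ ^ i) ^ q = ζ ^ i := by
    intro i
    obtain ⟨l, hl⟩ := hdvd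
    have : q = m * l + 1 := by omega
    rw [this, pow_succ, pow_mul, ← pow_mul ζ i m, mul_comm i m, pow_mul ζ m i, hζ.pow_eq_one]; simp
  have hζq' : ∀ i a, (ζ ^ i) ^ (q ^ a) = ζ ^ i := by
    intro i a
    induction a with
    | zero => simp
    | succ a ih => rw [pow_succ, pow_mul, ih, hζq]
  have hev : ∀ i, P.eval (algebraMap F F[X] (ζ ^ i)) =
      (1 + C (ζ ^ i * ρ) * X) ^ (∑ j, d j * q ^ e j) := by
    intro i
    rw [eval_prod, Fintype.prod_sigma, ← Finset.prod_pow_eq_pow_sum]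
    refine Finset.prod_congr rfl fun j _ => ?_
    simp only [w, eval_add, eval_one, eval_mul, eval_C, eval_X, Finset.prod_const,
      Finset.card_univ, Fintype.card_fin]
    rw [mul_comm (d j), pow_mul]
    congr 1
    have := add_pow_char_pow (p := p) (n := n * e j) (1 : F[X]) (C (ζ ^ i * ρ) * X)
    rw [pow_mul p n (e j), ← hq] at this
    rw [this, one_pow, C_mul, mul_assoc, mul_pow (C (ζ ^ i)), ← C_pow (a := ζ ^ i), hζq', mul_comm]
    rfl
  obtain ⟨κ, hκ0, hκ⟩ : ∃ κ : F, (∑ j, d j ≠ m + 1 → κ = 0) ∧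
      (m : F[X]) * P.coeff (m + 1) = C κ * X ^ (∑ j, d j * q ^ e j) := by
    by_cases hs : ∑ j, d j = m + 1
    · refine ⟨m * ρ ^ (∑ j, d j * q ^ e j), fun h => absurd hs h, ?_⟩
      have := coeff_prod_of_natDegree_le (s := Finset.univ) (fun i => 1 + C (w i) * X) 1
        (fun i _ => hdeg1 i)
      rw [Finset.card_univ, hcard, mul_one, hs] at this
      rw [this, C_mul, mul_assoc, C_pow, ← mul_pow, ← Finset.prod_pow_eq_pow_sum,
        Fintype.prod_sigma]
      have hco : ∀ i, (1 + C (w i) * X : F[X][X]).coeff 1 = w i := by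
        intro i
        rw [coeff_add, coeff_C_mul, coeff_X_one, coeff_one]; simp
      simp only [hco]
      rw [map_natCast]
      congr 1
      refine Finset.prod_congr rfl fun j _ => ?_
      simp only [w, Finset.prod_const, Finset.card_univ, Fintype.card_fin]
      rw [mul_comm (d j), pow_mul]
    · refine ⟨0, fun _ => rfl, ?_⟩
      rw [coeff_eq_zero_of_natDegree_lt (by omega)]; simp
  refine ⟨c, κ, hκ0, ?_⟩
  simp_rw [hev] at hc
  rw [h0, h1, hκ] at hc
  simpa using hc

theorem exists_prim {F : Type*} [Field F] [IsAlgClosed F] (m : ℕ) (h : (m : F) ≠ 0) :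
    ∃ ζ : F, IsPrimitiveRoot ζ m := by
  have : NeZero (m : F) := ⟨h⟩
  exact HasEnoughRootsOfUnity.exists_primitiveRoot F m

theorem core (F : Type*) [Field F] [IsAlgClosed F]
    (p k m n J : ℕ) [Fact p.Prime] [CharP F p]
    (hcop : Nat.Coprime k p) (hn : 0 < n) (hm : 0 < m) (hdvd : m ∣ p ^ n - 1)
    (d : Fin (J + 1) → ℕ) (hk : k = ∑ j, d j * (p ^ n) ^ (j : ℕ)) (hd : ∑ j, d j ≤ m + 1)
    (f : F[X]) :
    SumK k (m + m + if ∑ j, d j = m + 1 then 1 else 0) f := by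
  have hp : p.Prime := Fact.out
  have hk0 : 0 < k := by
    rcases Nat.eq_zero_or_pos k with h | h
    · rw [h, Nat.coprime_zero_left] at hcop; exact absurd hcop hp.one_lt.ne'
    · exact h
  have hqp : (p : ℕ) ∣ p ^ n := dvd_pow_self p hn.ne'
  have hq1 : 1 < p ^ n := Nat.one_lt_pow hn.ne' hp.one_lt
  have hq0F : ((p ^ n : ℕ) : F) = 0 := (CharP.cast_eq_zero_iff F p _).2 hqp
  -- nonvanishing of the lowest digit
  have hd0 : (d 0 : F) ≠ 0 := by
    intro h
    have h1 : p ∣ d 0 := (CharP.cast_eq_zero_iff F p _).1 h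
    have : p ∣ k := by
      rw [hk]
      refine Finset.dvd_sum fun j _ => ?_
      refine Fin.cases ?_ (fun j => ?_) j
      · exact Dvd.dvd.mul_right h1 _
      · exact Dvd.dvd.mul_left (dvd_pow hqp (by simp)) _
    exact hp.one_lt.ne' (Nat.eq_one_of_dvd_coprimes hcop this dvd_rfl)
  have hmF : (m : F) ≠ 0 := by
    intro h
    obtain ⟨l, hl⟩ := hdvd
    have : ((p ^ n - 1 : ℕ) : F) = 0 := by rw [hl]; push_cast; rw [h, zero_mul]
    rw [Nat.cast_sub hq1.le, hq0F] at this
    simp at this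
  obtain ⟨ζ, hζ⟩ := exists_prim (F := F) m hmF
  -- the exponent
  set r := Nat.totient k with hr
  have hrpos : 0 < r := Nat.totient_pos.2 hk0
  have hqr : (p ^ n) ^ r ≡ 1 [MOD k] := Nat.ModEq.pow_totient (hcop.symm.pow_left n)
  let e : Fin (J + 1) → ℕ := Fin.cons 0 (fun j => (r + 1) * j + 1)
  set k' := ∑ j, d j * (p ^ n) ^ e j with hk'
  have hkk : k ∣ k' := by
    have : k' ≡ k [MOD k] := by
      conv_lhs => rw [hk']
      conv => arg 3; rw [hk]
      refine Nat.ModEq.sum fun j _ => Nat.ModEq.mul_left _ ?_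
      refine Fin.cases ?_ (fun j => ?_) j
      · simp [e]; rfl
      · simp only [e, Fin.cons_succ, Fin.val_succ]
        have h2 := (hqr.pow (j : ℕ)).mul_right ((p ^ n) ^ ((j : ℕ) + 1))
        rw [one_pow, one_mul, ← pow_mul (p ^ n) r, ← pow_add] at h2
        convert h2 using 2
        ring
    exact (Nat.modEq_zero_iff_dvd.1 (this.trans (by simp [Nat.ModEq])))
  -- the twisting element
  obtain ⟨ρ, hρg, hρ⟩ : ∃ ρ : F, ρ ^ ((p ^ n) ^ (r + 1)) = ρ ∧ ρ ^ (p ^ n) ≠ ρ := by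
    have hlt : p ^ n < (p ^ n) ^ (r + 1) := by
      conv_lhs => rw [← pow_one (p ^ n)]
      exact Nat.pow_lt_pow_right hq1 (by omega)
    have hne : (((p ^ n) ^ (r + 1) - 1 : ℕ) : F) ≠ 0 := by
      rw [Nat.cast_sub (by omega), Nat.cast_pow, hq0F]; simp
    obtain ⟨ρ, hρ⟩ := exists_prim (F := F) _ hne
    have hρ0 : ρ ≠ 0 := hρ.ne_zero (by omega)
    refine ⟨ρ, ?_, ?_⟩
    · conv_lhs => rw [show (p ^ n) ^ (r + 1) = ((p ^ n) ^ (r + 1) - 1) + 1 by omega]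
      rw [pow_succ, hρ.pow_eq_one, one_mul]
    · intro h
      rw [show p ^ n = (p ^ n - 1) + 1 by omega, pow_succ] at h
      have h1 : ρ ^ (p ^ n - 1) = 1 := by
        apply mul_right_cancel₀ hρ0; rw [h, one_mul]
      have := Nat.le_of_dvd (by omega) (hρ.dvd_of_pow_eq_one _ h1)
      omega
  have hρe : ∀ j : ℕ, ρ ^ ((p ^ n) ^ ((r + 1) * j + 1)) = ρ ^ (p ^ n) := by
    intro j
    induction j with
    | zero => simp
    | succ j ih =>
      rw [show (r + 1) * (j + 1) + 1 = (r + 1) + ((r + 1) * j + 1) by ring, pow_add, pow_mul, hρg,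
        ih]
  obtain ⟨c₁, κ₁, hκ₁, h₁⟩ := block p hm hdvd hζ d e hd ρ
  obtain ⟨c₂, κ₂, hκ₂, h₂⟩ := block p hm hdvd hζ d e hd (1 : F)
  rw [← hk'] at h₁ h₂
  set σ := ρ ^ (p ^ n) with hσ
  set A : F := m * d 0 * (ρ - σ) with hA
  have hA0 : A ≠ 0 := mul_ne_zero (mul_ne_zero hmF hd0) (sub_ne_zero.2 (Ne.symm hρ))
  set B : F := c₁ - σ * c₂ with hB
  set κ : F := κ₁ - σ * κ₂ with hκdef
  have hκ : ∑ j, d j ≠ m + 1 → κ = 0 := fun h => by rw [hκdef, hκ₁ h, hκ₂ h]; simp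
  have hS : (∑ j, (d j : F[X]) * (C ρ * X) ^ ((p ^ n) ^ e j)) -
      C σ * (∑ j, (d j : F[X]) * (C 1 * X) ^ ((p ^ n) ^ e j)) =
      C (d 0 * (ρ - σ)) * X := by
    rw [Fin.sum_univ_succ, Fin.sum_univ_succ]
    simp only [e, Fin.cons_zero, Fin.cons_succ, mul_pow, ← C_pow, hρe, C_1, one_mul,
      pow_zero, pow_one]
    rw [mul_add, Finset.mul_sum]
    have : ∀ x : Fin J, C σ * ((d x.succ : F[X]) * X ^ (p ^ n) ^ ((r + 1) * (x : ℕ) + 1)) =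
      (d x.succ : F[X]) * (C σ * X ^ (p ^ n) ^ ((r + 1) * (x : ℕ) + 1)) := fun x => by ring
    simp_rw [this]
    simp only [C_mul, C_sub, map_natCast]
    ring
  -- the main identity
  have hid : C A * X + C B =
      (∑ i ∈ Finset.range m, C ((ζ ^ i) ^ (m - 1)) * (1 + C (ζ ^ i * ρ) * X) ^ k') +
      (∑ i ∈ Finset.range m, C (-σ * (ζ ^ i) ^ (m - 1)) * (1 + C (ζ ^ i * 1) * X) ^ k') +
      C (-κ) * X ^ k' := by
    have h3 : (∑ i ∈ Finset.range m, C (-σ * (ζ ^ i) ^ (m - 1)) *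
        (1 + C (ζ ^ i * 1) * X) ^ k') = -C σ * ∑ i ∈ Finset.range m, C ((ζ ^ i) ^ (m - 1)) *
        (1 + C (ζ ^ i * 1) * X) ^ k' := by
      rw [Finset.mul_sum]
      refine Finset.sum_congr rfl fun i _ => ?_
      rw [C_mul, C_neg]; ring
    rw [h3, h₁, h₂]
    have h4 : C A = (m : F[X]) * C (d 0 * (ρ - σ)) := by
      rw [hA, mul_assoc, C_mul]; simp
    rw [h4, mul_assoc, ← hS, hB, hκdef]
    simp only [C_sub, C_mul, C_neg]
    ring
  have hid2 := congrArg (fun g : F[X] => g.comp (C A⁻¹ * (f - C B))) hid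
  have hlhs : (C A * X + C B).comp (C A⁻¹ * (f - C B)) = f := by
    simp only [add_comp, mul_comp, C_comp, X_comp]
    rw [← mul_assoc, ← C_mul, mul_inv_cancel₀ hA0]; simp
  simp only [hlhs] at hid2
  rw [hid2]
  simp only [add_comp, Polynomial.sum_comp, mul_comp, C_comp, pow_comp, X_comp, one_comp]
  refine SumK.add (SumK.add (SumK.of_sum hk0 hkk _ _) (SumK.of_sum hk0 hkk _ _)) ?_
  split_ifs with h
  · have := SumK.of_sum (m := 1) hk0 hkk (fun _ => -κ) (fun _ => C A⁻¹ * (f - C B))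
    simpa using this
  · rw [hκ h]
    exact ⟨Fin.elim0, by simp⟩

theorem ofDigits_sum (b : ℕ) (L : List ℕ) :
    Nat.ofDigits b L = ∑ i : Fin L.length, L.get i * b ^ (i : ℕ) := by
  induction L with
  | nil => simp
  | cons a L ih =>
    rw [Nat.ofDigits_cons, ih]
    simp only [List.length_cons]
    rw [Fin.sum_univ_succ, Finset.mul_sum]
    simp only [List.get_eq_getElem, Fin.val_zero, List.getElem_cons_zero, pow_zero, mul_one,
      Fin.val_succ, List.getElem_cons_succ]
    congr 1
    refine Finset.sum_congr rfl fun i _ => ?_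
    ring

theorem main_theorem (F : Type*) [Field F] [IsAlgClosed F]
    (p k M n : ℕ) [Fact p.Prime] [CharP F p]
    (hcop : Nat.Coprime k p) (hn : 0 < n)
    (hγ : (Nat.digits (p ^ n) k).sum ≤ M)
    (hdvd : (M - 1) ∣ (p ^ n - 1)) :
    waring F k ≤ ((2 * (M - 1) + (if (Nat.digits (p ^ n) k).sum = M then 1 else 0) : ℕ) : ℕ∞) := by
  have hp : p.Prime := Fact.out
  have hq1 : 1 < p ^ n := Nat.one_lt_pow hn.ne' hp.one_lt
  have hm : 0 < M - 1 := by
    rcases Nat.eq_zero_or_pos (M - 1) with h | h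
    · rw [h, zero_dvd_iff] at hdvd; omega
    · exact h
  refine sInf_le ⟨_, rfl, fun f => ?_⟩
  have hk := Nat.ofDigits_digits (p ^ n) k
  generalize Nat.digits (p ^ n) k = L at *
  cases L with
  | nil =>
    simp at hk
    subst hk
    rw [Nat.coprime_zero_left] at hcop; exact absurd hcop hp.one_lt.ne'
  | cons a L =>
    rw [ofDigits_sum] at hk
    have hsum : ∑ j : Fin (L.length + 1), (a :: L).get j = (a :: L).sum := by
      have := Fin.sum_univ_getElem (a :: L)
      simpa using this
    have := core F p k (M - 1) n L.length hcop hn hm hdvd (fun j => (a :: L).get j) hk.symm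
      (by rw [hsum]; omega) f
    rw [hsum, show M - 1 + 1 = M by omega, ← two_mul] at this
    exact this
end

section
/- Let p be prime, k ∈ ℕ coprime to p, and r the multiplicative order of p in (ℤ/kℤ)^×. If u ∈ ℕ is relatively prime to r and γ_p(k) ≤ p^u, then v(p,k) ≤ 2(p^u − 1) + [γ_p(k) = p^u]. -/
def WRep {R : Type*} [CommRing R] (k n : ℕ) (f : R) : Prop :=
  ∃ y : Fin n → R, f = ∑ i, y i ^ k

lemma WRep.add {R : Type*} [CommRing R] {k m n : ℕ} {f g : R}
    (hf : WRep k m f) (hg : WRep k n g) : WRep k (m + n) (f + g) := by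
  obtain ⟨y, rfl⟩ := hf
  obtain ⟨z, rfl⟩ := hg
  exact ⟨Fin.append y z, by simp [Fin.sum_univ_add]⟩

lemma WRep.one {R : Type*} [CommRing R] {k : ℕ} (y : R) : WRep k 1 (y ^ k) :=
  ⟨fun _ => y, by simp⟩

lemma WRep.sum {R : Type*} [CommRing R] {k : ℕ} (n : ℕ) (g : ℕ → R)
    (h : ∀ j, WRep k 1 (g j)) : WRep k n (∑ j ∈ Finset.range n, g j) := by
  induction n with
  | zero => exact ⟨fun _ => 0, by simp⟩
  | succ n ih => rw [Finset.sum_range_succ]; exact ih.add (h n)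

lemma prodH {R : Type*} [CommRing R] (m : ℕ) (c : ℕ → ℕ) (y : ℕ → R) :
    (∏ i ∈ Finset.range m, (1 + Polynomial.X * Polynomial.C (y i)) ^ c i).natDegree
        ≤ ∑ i ∈ Finset.range m, c i ∧
    (∏ i ∈ Finset.range m, (1 + Polynomial.X * Polynomial.C (y i)) ^ c i).coeff
        (∑ i ∈ Finset.range m, c i) = ∏ i ∈ Finset.range m, y i ^ c i ∧
    (∏ i ∈ Finset.range m, (1 + Polynomial.X * Polynomial.C (y i)) ^ c i).coeff 0 = 1 ∧
    (∏ i ∈ Finset.range m, (1 + Polynomial.X * Polynomial.C (y i)) ^ c i).coeff 1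
      = ∑ i ∈ Finset.range m, c i * y i := by
  have hlin : ∀ z : R, (1 + Polynomial.X * Polynomial.C z).natDegree ≤ 1 := by
    intro z; compute_degree
  have hpow : ∀ (z : R) (n : ℕ), ((1 + Polynomial.X * Polynomial.C z) ^ n).natDegree ≤ n := by
    intro z n
    simpa using Polynomial.natDegree_pow_le_of_le n (hlin z)
  have htop : ∀ (z : R) (n : ℕ), ((1 + Polynomial.X * Polynomial.C z) ^ n).coeff n = z ^ n := by
    intro z n
    have := Polynomial.coeff_pow_of_natDegree_le (m := n) (hlin z)
    simpa [Polynomial.coeff_one] using this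
  have h0 : ∀ (z : R) (n : ℕ), ((1 + Polynomial.X * Polynomial.C z) ^ n).coeff 0 = 1 := by
    intro z n
    simp [Polynomial.coeff_zero_eq_eval_zero]
  have h1 : ∀ (z : R) (n : ℕ), ((1 + Polynomial.X * Polynomial.C z) ^ n).coeff 1 = n * z := by
    intro z n
    induction n with
    | zero => simp [Polynomial.coeff_one]
    | succ n ih =>
      rw [pow_succ, Polynomial.mul_coeff_one, ih, h0]
      simp [Polynomial.coeff_one]
      ring
  induction m with
  | zero => simp [Polynomial.coeff_one]
  | succ m ih =>
    obtain ⟨a1, a2, a3, a4⟩ := ih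
    simp only [Finset.prod_range_succ, Finset.sum_range_succ]
    refine ⟨?_, ?_, ?_, ?_⟩
    · exact Polynomial.natDegree_mul_le_of_le a1 (hpow _ _)
    · rw [Polynomial.coeff_mul_add_eq_of_natDegree_le a1 (hpow _ _), a2, htop]
    · rw [Polynomial.mul_coeff_zero, a3, h0, one_mul]
    · rw [Polynomial.mul_coeff_one, a3, a4, h0, h1]; ring

lemma geo {F : Type*} [Field F] {n : ℕ} {ω : F} (hω : IsPrimitiveRoot ω n) (hn : 0 < n)
    (h : Polynomial (Polynomial F)) (hd : h.natDegree ≤ n + 1) :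
    ∑ j ∈ Finset.range n, Polynomial.C (ω ^ j)⁻¹ * h.eval (Polynomial.C (ω ^ j)) =
      h.coeff 0 * Polynomial.C (∑ j ∈ Finset.range n, (ω ^ j)⁻¹)
        + n * h.coeff 1 + n * h.coeff (n + 1) := by
  have hω0 : ω ≠ 0 := hω.ne_zero hn.ne'
  have e1 : ∀ j, Polynomial.C (ω ^ j)⁻¹ * h.eval (Polynomial.C (ω ^ j)) =
      ∑ i ∈ Finset.range (n + 2), h.coeff i * Polynomial.C ((ω ^ j)⁻¹ * (ω ^ j) ^ i) := by
    intro j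
    rw [Polynomial.eval_eq_sum_range' (Nat.lt_succ_of_le hd), Finset.mul_sum]
    refine Finset.sum_congr rfl fun i _ => ?_
    simp only [map_mul, map_pow]; ring
  simp_rw [e1]
  rw [Finset.sum_comm]
  simp_rw [← Finset.mul_sum, ← map_sum]
  rw [Finset.sum_range_succ, Finset.sum_range_succ', Finset.sum_eq_single_of_mem 0]
  · have s1 : ∑ j ∈ Finset.range n, (ω ^ j)⁻¹ * (ω ^ j) ^ (0 + 1) = n := by
      rw [Finset.sum_congr rfl (g := fun _ => (1 : F))]
      · simp
      · intro j _
        rw [zero_add, pow_one]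
        exact inv_mul_cancel₀ (pow_ne_zero _ hω0)
    have s2 : ∑ j ∈ Finset.range n, (ω ^ j)⁻¹ * (ω ^ j) ^ (n + 1) = n := by
      rw [Finset.sum_congr rfl (g := fun _ => (1 : F))]
      · simp
      · intro j _
        rw [pow_succ, ← pow_mul, mul_comm j n, pow_mul, hω.pow_eq_one, one_pow, one_mul]
        exact inv_mul_cancel₀ (pow_ne_zero _ hω0)
    rw [s1, s2]
    simp
    ring
  · simpa using hn
  · intro i hi hi0
    have hi' : i < n := by simpa using hi
    have : ∑ j ∈ Finset.range n, (ω ^ j)⁻¹ * (ω ^ j) ^ (i + 1) = 0 := by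
      rw [Finset.sum_congr rfl (g := fun j => (ω ^ i) ^ j)]
      · have hne : ω ^ i ≠ 1 := hω.pow_ne_one_of_pos_of_lt hi0 hi'
        rw [geom_sum_eq hne, ← pow_mul, mul_comm, pow_mul, hω.pow_eq_one]
        simp
      · intro j _
        rw [pow_succ, mul_comm, mul_assoc, mul_inv_cancel₀ (pow_ne_zero _ hω0), mul_one,
          ← pow_mul, ← pow_mul, mul_comm]
    rw [this]; simp

/-- The exponents: `p^i` may be replaced modulo `k` by `p^(u e)` with `e ≡ 1 mod r+1`. -/
lemma exps (p k u : ℕ) (hu : Nat.Coprime u (orderOf (p : ZMod k)))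
    (hr0 : orderOf (p : ZMod k) ≠ 0) (i : ℕ) :
    ∃ t : ℕ, ((p : ZMod k)) ^ (u * (1 + (orderOf (p : ZMod k) + 1) * t)) = (p : ZMod k) ^ i := by
  obtain ⟨v, -, hv⟩ := Nat.exists_mul_mod_eq_of_coprime i hu hr0
  refine ⟨v + (orderOf (p : ZMod k) - 1), ?_⟩
  rw [← pow_mod_orderOf, ← pow_mod_orderOf _ i, ← hv]
  congr 1
  generalize orderOf (p : ZMod k) = r at *
  obtain ⟨s, rfl⟩ := Nat.exists_eq_succ_of_ne_zero hr0
  have : u * (1 + (s.succ + 1) * (v + (s.succ - 1))) = u * v + s.succ * (u * (v + s + 1)) := by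
    simp only [Nat.succ_eq_add_one, Nat.add_sub_cancel]; ring
  rw [this, Nat.add_mul_mod_self_left]

lemma list_sums (b : ℕ) (L : List ℕ) :
    L.sum = ∑ i ∈ Finset.range L.length, L.getD i 0 ∧
    Nat.ofDigits b L = ∑ i ∈ Finset.range L.length, L.getD i 0 * b ^ i := by
  induction L with
  | nil => simp
  | cons a L ih =>
    rw [List.length_cons, Finset.sum_range_succ', Finset.sum_range_succ', List.sum_cons,
      Nat.ofDigits_cons, ih.1, ih.2, Finset.mul_sum]
    simp only [List.getD_cons_succ, List.getD_cons_zero]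
    refine ⟨add_comm _ _, ?_⟩
    rw [add_comm]
    congr 1
    · refine Finset.sum_congr rfl fun i _ => ?_
      ring
    · simp

lemma main_rep (F : Type*) [Field F] [IsAlgClosed F] (p k u M m : ℕ) [Fact p.Prime] [CharP F p]
    (hk : k ≠ 0) (hu : u ≠ 0) (hM : 2 ≤ M) (c t : ℕ → ℕ) (hc0 : ((c 0 : ℕ) : F) ≠ 0)
    (Q : ℕ → ℕ) (hQ0 : Q 0 = 1) (hQ : ∀ i, Q (i + 1) = p ^ (u * (1 + M * t i)))
    (hK : k ∣ ∑ i ∈ Finset.range (m + 1), Q i * c i)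
    (hγ : ∑ i ∈ Finset.range (m + 1), c i ≤ p ^ u) (f : Polynomial F) :
    WRep k (2 * (p ^ u - 1) + if ∑ i ∈ Finset.range (m + 1), c i = p ^ u then 1 else 0) f := by
  have hp : p.Prime := Fact.out
  set q := p ^ u with hq
  have hq2 : 2 ≤ q := le_trans hp.two_le (Nat.le_self_pow hu p)
  have hqF : (q : F) = 0 := by rw [hq]; push_cast; rw [CharP.cast_eq_zero F p, zero_pow hu]
  obtain ⟨n, hn⟩ : ∃ n, q = n + 1 := ⟨q - 1, by omega⟩
  have hn0 : 0 < n := by omega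
  have hnF : (n : F) = -1 := by
    rw [hn] at hqF; push_cast at hqF; exact eq_neg_of_add_eq_zero_left hqF
  obtain ⟨ω, hω⟩ : ∃ ω : F, IsPrimitiveRoot ω n := by
    have : NeZero (n : F) := ⟨by rw [hnF]; simp⟩
    exact HasEnoughRootsOfUnity.exists_primitiveRoot F n
  obtain ⟨b, hb0, hbM, hbq⟩ : ∃ b : F, b ≠ 0 ∧ b ^ (q ^ M) = b ∧ b ^ q ≠ b := by
    have h1 : q < q ^ M := by
      calc q = q ^ 1 := (pow_one q).symm
        _ < q ^ M := Nat.pow_lt_pow_right hq2 (by omega)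
    obtain ⟨N, hN⟩ : ∃ N, q ^ M = N + 1 := ⟨q ^ M - 1, by omega⟩
    have hNF : (N : F) = -1 := by
      have : ((q ^ M : ℕ) : F) = 0 := by push_cast; rw [hqF, zero_pow (by omega)]
      rw [hN] at this; push_cast at this; exact eq_neg_of_add_eq_zero_left this
    have : NeZero (N : F) := ⟨by rw [hNF]; simp⟩
    obtain ⟨b, hb⟩ := HasEnoughRootsOfUnity.exists_primitiveRoot F N
    have hb0 : b ≠ 0 := hb.ne_zero (by omega)
    refine ⟨b, hb0, ?_, ?_⟩
    · rw [hN, pow_succ, hb.pow_eq_one, one_mul]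
    · intro h
      rw [hn, pow_succ] at h
      have h2 : b ^ n = 1 := by
        apply mul_right_cancel₀ hb0; rw [h, one_mul]
      exact hb.pow_ne_one_of_pos_of_lt hn0.ne' (by omega) h2
  have hbMt : ∀ s, b ^ (q ^ (M * s)) = b := by
    intro s
    induction s with
    | zero => simp
    | succ s ih => rw [mul_add, mul_one, pow_add, pow_mul, ih, hbM]
  have hbQ : ∀ i, b ^ Q (i + 1) = b ^ q := by
    intro i
    rw [hQ, pow_mul, ← hq, pow_add, pow_one, mul_comm, pow_mul, hbMt]
  set K := ∑ i ∈ Finset.range (m + 1), Q i * c i with hKdef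
  set d : F := (b ^ q)⁻¹ with hd
  have hbq0 : b ^ q ≠ 0 := pow_ne_zero _ hb0
  have hdb : 1 - d * b ≠ 0 := by
    intro h
    apply hbq
    have h2 : d * b = 1 := (sub_eq_zero.mp h).symm
    have : b ^ q * (d * b) = b ^ q := by rw [h2, mul_one]
    rw [hd, ← mul_assoc, mul_inv_cancel₀ hbq0, one_mul] at this
    exact this.symm
  -- scalar multiples of K-th powers
  have hone : ∀ (a : F) (y : Polynomial F), WRep k 1 (Polynomial.C a * y ^ K) := by
    intro a y
    obtain ⟨l, hl⟩ := hK
    obtain ⟨a', rfl⟩ := IsAlgClosed.exists_pow_nat_eq a (Nat.pos_of_ne_zero hk)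
    have : Polynomial.C (a' ^ k) * y ^ K = (Polynomial.C a' * y ^ l) ^ k := by
      rw [hl, mul_pow, map_pow, ← pow_mul, mul_comm k l]
    rw [this]; exact WRep.one _
  let E : Polynomial F → Polynomial F := fun x =>
    if ∑ i ∈ Finset.range (m + 1), c i = q then x ^ K else 0
  have hG : ∀ x : Polynomial F,
      ∑ j ∈ Finset.range n, Polynomial.C (ω ^ j)⁻¹ * (1 + Polynomial.C (ω ^ j) * x) ^ K =
      Polynomial.C (∑ j ∈ Finset.range n, (ω ^ j)⁻¹)
        + n * (∑ i ∈ Finset.range (m + 1), (c i : Polynomial F) * x ^ Q i) + n * E x := by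
    intro x
    obtain ⟨h1, h2, h3, h4⟩ := prodH (m + 1) c (fun i => x ^ Q i)
    have hg := geo hω hn0 _ (h1.trans (hγ.trans hn.le))
    rw [h3, h4, one_mul] at hg
    have hE : (∏ i ∈ Finset.range (m + 1), (1 + Polynomial.X * Polynomial.C (x ^ Q i)) ^ c i).coeff
        (n + 1) = E x := by
      simp only [E]
      split_ifs with h
      · rw [← hn, ← h, h2, hKdef, ← Finset.prod_pow_eq_pow_sum]
        exact Finset.prod_congr rfl fun i _ => (pow_mul _ _ _).symm
      · apply Polynomial.coeff_eq_zero_of_natDegree_lt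
        omega
    rw [hE] at hg
    rw [← hg]
    refine Finset.sum_congr rfl fun j _ => ?_
    congr 1
    rw [Polynomial.eval_prod, hKdef, ← Finset.prod_pow_eq_pow_sum]
    refine Finset.prod_congr rfl fun i _ => ?_
    rw [pow_mul]
    simp only [Polynomial.eval_pow, Polynomial.eval_add, Polynomial.eval_one, Polynomial.eval_mul,
      Polynomial.eval_X, Polynomial.eval_C]
    congr 1
    have ha : (ω ^ j) ^ q = ω ^ j := by
      rw [hn, pow_succ, ← pow_mul, mul_comm j n, pow_mul, hω.pow_eq_one, one_pow, one_mul]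
    have hae : ∀ s, (ω ^ j) ^ (q ^ s) = ω ^ j := by
      intro s
      induction s with
      | zero => simp
      | succ s ih => rw [pow_succ, pow_mul, ih, ha]
    cases i with
    | zero => rw [hQ0]; simp
    | succ i =>
      have : (ω ^ j) ^ Q (i + 1) = ω ^ j := by rw [hQ, pow_mul, ← hq, hae]
      rw [hQ, add_pow_char_pow, ← hQ, one_pow, mul_pow, ← map_pow, this]
  set S := ∑ j ∈ Finset.range n, (ω ^ j)⁻¹ with hS
  have hkey : ∀ x : Polynomial F, WRep k (n + n) (Polynomial.C (S * (1 - d))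
      + Polynomial.C (n * (c 0 * (1 - d * b))) * x + n * (E x - Polynomial.C d * E (Polynomial.C b * x))) := by
    intro x
    have r1 := WRep.sum (k := k) n
      (fun j => Polynomial.C (ω ^ j)⁻¹ * (1 + Polynomial.C (ω ^ j) * x) ^ K) (fun j => hone _ _)
    have r2 := WRep.sum (k := k) n
      (fun j => Polynomial.C (-d * (ω ^ j)⁻¹) *
        (1 + Polynomial.C (ω ^ j) * (Polynomial.C b * x)) ^ K) (fun j => hone _ _)
    have r := r1.add r2
    have e2 : ∑ j ∈ Finset.range n, Polynomial.C (-d * (ω ^ j)⁻¹) *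
        (1 + Polynomial.C (ω ^ j) * (Polynomial.C b * x)) ^ K = Polynomial.C (-d) *
        ∑ j ∈ Finset.range n, Polynomial.C (ω ^ j)⁻¹ *
        (1 + Polynomial.C (ω ^ j) * (Polynomial.C b * x)) ^ K := by
      rw [Finset.mul_sum]
      refine Finset.sum_congr rfl fun j _ => ?_
      rw [map_mul]; ring
    rw [e2, hG, hG] at r
    convert r using 1
    have e3 : ∑ i ∈ Finset.range (m + 1), (c i : Polynomial F) * (Polynomial.C b * x) ^ Q i =
        Polynomial.C (b ^ q) * ∑ i ∈ Finset.range m, (c (i + 1) : Polynomial F) * x ^ Q (i + 1)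
        + c 0 * (Polynomial.C b * x) := by
      rw [Finset.sum_range_succ', hQ0, pow_one, Finset.mul_sum]
      congr 1
      refine Finset.sum_congr rfl fun i _ => ?_
      rw [mul_pow, ← map_pow, hbQ]; ring
    rw [e3, Finset.sum_range_succ', hQ0, pow_one]
    have hdC : Polynomial.C d * Polynomial.C (b ^ q) = 1 := by
      rw [← map_mul, hd, inv_mul_cancel₀ hbq0, map_one]
    simp only [map_mul, map_sub, map_one, map_neg, map_natCast]
    linear_combination (n : Polynomial F) * (∑ i ∈ Finset.range m, (c (i + 1) : Polynomial F) * x ^ Q (i + 1)) * hdC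
  have hA : (n : F) * (c 0 * (1 - d * b)) ≠ 0 := by
    rw [hnF]; exact mul_ne_zero (by simp) (mul_ne_zero hc0 hdb)
  set A : F := n * (c 0 * (1 - d * b)) with hAdef
  have hx := hkey (Polynomial.C A⁻¹ * (f - Polynomial.C (S * (1 - d))))
  rw [← mul_assoc, ← map_mul, mul_inv_cancel₀ hA, map_one, one_mul, add_sub_cancel] at hx
  have hnn : 2 * (q - 1) = n + n := by omega
  rw [hnn]
  split_ifs with h
  · set x := Polynomial.C A⁻¹ * (f - Polynomial.C (S * (1 - d))) with hxd
    have r := hx.add (hone (-(n * (1 - d * b ^ K))) x)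
    convert r using 1
    simp only [E, if_pos h, mul_pow]
    simp only [map_mul, map_sub, map_one, map_neg, map_pow, map_natCast]
    ring
  · simpa [E, h] using hx

theorem waring_order_bound (F : Type*) [Field F] [IsAlgClosed F]
    (p k u : ℕ) [Fact p.Prime] [CharP F p]
    (hcop : Nat.Coprime k p)
    (hu : Nat.Coprime u (orderOf ((p : ZMod k))))
    (hγ : (Nat.digits p k).sum ≤ p ^ u) :
    waring F k ≤ ((2 * (p ^ u - 1) + (if (Nat.digits p k).sum = p ^ u then 1 else 0) : ℕ) : ℕ∞) := by
  have hp : p.Prime := Fact.out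
  have hk : k ≠ 0 := by
    rintro rfl
    rw [Nat.coprime_zero_left] at hcop
    exact hp.one_lt.ne' hcop
  have hmod : k % p ≠ 0 := by
    intro h
    exact hp.one_lt.ne' (Nat.eq_one_of_dvd_coprimes hcop (Nat.dvd_of_mod_eq_zero h) dvd_rfl)
  have hdig : Nat.digits p k = (k % p) :: Nat.digits p (k / p) :=
    Nat.digits_def' hp.one_lt (Nat.pos_of_ne_zero hk)
  refine sInf_le ⟨_, rfl, ?_⟩
  intro f
  change WRep k _ f
  by_cases hu0 : u = 0
  · subst hu0
    have hs : (Nat.digits p k).sum = 1 := by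
      refine le_antisymm (by simpa using hγ) ?_
      rw [hdig, List.sum_cons]; omega
    have hk1 : k = 1 := by
      rw [hdig, List.sum_cons] at hs
      have h0 : (Nat.digits p (k / p)).sum = 0 := by omega
      have h1 : k % p = 1 := by omega
      have h2 : k / p = 0 := by
        by_contra hne
        have hm := Nat.getLast_digit_ne_zero p hne
        have := List.sum_eq_zero_iff.mp h0 _ (List.getLast_mem (Nat.digits_ne_nil_iff_ne_zero.mpr hne))
        exact hm this
      have := Nat.mod_add_div k p
      rw [h1, h2] at this
      omega
    rw [hs]
    subst hk1
    simpa using WRep.one (k := 1) f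
  have : NeZero k := ⟨hk⟩
  have hunit : IsUnit (p : ZMod k) := (ZMod.isUnit_iff_coprime p k).mpr hcop.symm
  have hr0 : orderOf (p : ZMod k) ≠ 0 := by
    obtain ⟨w, hw⟩ := hunit
    rw [← hw, orderOf_units]
    exact (orderOf_pos w).ne'
  choose t ht using exps p k u hu hr0
  obtain ⟨hs1, hs2⟩ := list_sums p (Nat.digits p k)
  rw [Nat.ofDigits_digits] at hs2
  have hlen : (Nat.digits p k).length = (Nat.digits p (k / p)).length + 1 := by rw [hdig]; simp
  rw [hlen] at hs1 hs2
  set c : ℕ → ℕ := fun i => (Nat.digits p k).getD i 0 with hc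
  have hc0 : c 0 = k % p := by simp [hc, hdig]
  rw [hs1] at hγ ⊢
  let Q : ℕ → ℕ := fun i => match i with
    | 0 => 1
    | i + 1 => p ^ (u * (1 + (orderOf (p : ZMod k) + 1) * t (i + 1)))
  refine main_rep F p k u (orderOf (p : ZMod k) + 1) _ hk hu0 (by omega) c (fun i => t (i + 1))
    ?_ Q rfl (fun i => rfl) ?_ hγ f
  · rw [hc0, Ne, CharP.cast_eq_zero_iff F p]
    intro h
    exact hmod (Nat.eq_zero_of_dvd_of_lt h (Nat.mod_lt _ hp.pos))
  · rw [← ZMod.natCast_eq_zero_iff]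
    have hkk : ((k : ℕ) : ZMod k) = 0 := by simp
    refine Eq.trans ?_ ((congrArg (Nat.cast : ℕ → ZMod k) hs2).symm.trans hkk)
    push_cast
    refine Finset.sum_congr rfl fun i _ => ?_
    rw [mul_comm]
    congr 1
    cases i with
    | zero => simp [Q]
    | succ i => simp only [Q]; push_cast; exact ht (i + 1)
end

section
/- Fix ε > 0. For all sufficiently large r ∈ ℕ, there exists a prime ℓ with ln(r) < ℓ ≤ (2+ε)·ln(r) such that ℓ does not divide r. -/
open MeasureTheory Filter Topology

noncomputable def hatF (t : ℝ) : ℝ := max 0 (1 - |t|)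
noncomputable def fejK (v : ℝ) : ℝ := Real.sinc (v / 2) ^ 2

lemma continuous_hatF : Continuous hatF := by unfold hatF; fun_prop
lemma hatF_nonneg (t : ℝ) : 0 ≤ hatF t := le_max_left _ _
lemma hatF_le_one (t : ℝ) : hatF t ≤ 1 := max_le (by norm_num) (by linarith [abs_nonneg t])
lemma hatF_eq_zero {t : ℝ} (ht : 1 ≤ |t|) : hatF t = 0 := max_eq_left (by linarith)
lemma hasCompactSupport_hatF : HasCompactSupport hatF := by
  refine HasCompactSupport.intro (K := Set.Icc (-1) 1) isCompact_Icc fun x hx => ?_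
  apply hatF_eq_zero
  by_contra h
  push Not at h
  exact hx ⟨(abs_lt.1 h).1.le, (abs_lt.1 h).2.le⟩
lemma integrable_hatF : Integrable hatF :=
  continuous_hatF.integrable_of_hasCompactSupport hasCompactSupport_hatF

lemma continuous_fejK : Continuous fejK := by
  unfold fejK; exact (Real.continuous_sinc.comp (by fun_prop)).pow 2
lemma fejK_nonneg (v : ℝ) : 0 ≤ fejK v := sq_nonneg _
lemma fejK_mul_sq (v : ℝ) : fejK v * v ^ 2 = 2 * (1 - Real.cos v) := by
  unfold fejK
  rcases eq_or_ne v 0 with rfl | hv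
  · simp
  · rw [Real.sinc_of_ne_zero (by positivity)]
    have := Real.cos_sq' (v/2)
    have h2 := Real.cos_two_mul (v/2)
    rw [mul_div_cancel₀ v (by norm_num : (2:ℝ) ≠ 0)] at h2
    rw [h2, this]; field_simp; ring
lemma fejK_le (v : ℝ) : fejK v ≤ 5 * (1 + v ^ 2)⁻¹ := by
  have h1 : fejK v ≤ 1 := by
    unfold fejK
    have := Real.abs_sinc_le_one (v/2)
    exact (sq_le_one_iff_abs_le_one _).2 this
  have h2 := fejK_mul_sq v
  have h3 := Real.neg_one_le_cos v
  rw [← div_eq_mul_inv, le_div_iff₀ (by positivity)]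
  nlinarith
lemma integrable_fejK : Integrable fejK := by
  refine (integrable_inv_one_add_sq.const_mul 5).mono' continuous_fejK.aestronglyMeasurable ?_
  refine Eventually.of_forall fun v => ?_
  rw [Real.norm_of_nonneg (fejK_nonneg v)]
  exact fejK_le v
lemma integral_fejK_pos : 0 < ∫ v, fejK v :=
  integral_pos_of_integrable_nonneg_nonzero continuous_fejK integrable_fejK
    fejK_nonneg (x := 0) (by simp [fejK])

lemma fourier_hatF (v : ℝ) : ∫ t : ℝ, (hatF t : ℂ) * Complex.exp (Complex.I * t * v) = fejK v := by
  have e1 : ∫ t : ℝ, (hatF t : ℂ) * Complex.exp (Complex.I * t * v)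
      = ∫ t in (-1:ℝ)..1, (hatF t : ℂ) * Complex.exp (Complex.I * t * v) := by
    rw [intervalIntegral.integral_of_le (by norm_num)]
    rw [setIntegral_eq_integral_of_forall_compl_eq_zero]
    intro t ht
    rw [hatF_eq_zero]; · simp
    by_contra h
    push Not at h
    exact ht ⟨(abs_lt.1 h).1, (abs_lt.1 h).2.le⟩
  have hc : Continuous fun t : ℝ => (hatF t : ℂ) * Complex.exp (Complex.I * t * v) := by
    have := continuous_hatF
    fun_prop
  rw [e1, ← intervalIntegral.integral_add_adjacent_intervals (b := 0)
    (hc.intervalIntegrable _ _) (hc.intervalIntegrable _ _)]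
  have e2 : ∫ t in (-1:ℝ)..0, (hatF t : ℂ) * Complex.exp (Complex.I * t * v)
     = ∫ t in (-1:ℝ)..0, (1 + (t:ℂ)) * Complex.exp ((Complex.I * v) * t) := by
    refine intervalIntegral.integral_congr fun t ht => ?_
    rw [Set.uIcc_of_le (by norm_num)] at ht
    have : hatF t = 1 + t := by
      unfold hatF; rw [abs_of_nonpos ht.2, max_eq_right] <;> linarith [ht.1]
    simp only [this]; push_cast; ring_nf
  have e3 : ∫ t in (0:ℝ)..1, (hatF t : ℂ) * Complex.exp (Complex.I * t * v)
     = ∫ t in (0:ℝ)..1, (1 - (t:ℂ)) * Complex.exp ((Complex.I * v) * t) := by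
    refine intervalIntegral.integral_congr fun t ht => ?_
    rw [Set.uIcc_of_le (by norm_num)] at ht
    have : hatF t = 1 - t := by
      unfold hatF; rw [abs_of_nonneg ht.1, max_eq_right] <;> linarith [ht.2]
    simp only [this]; push_cast; ring_nf
  rw [e2, e3]
  rcases eq_or_ne v 0 with rfl | hv
  · have h1 : ∫ t in (-1:ℝ)..0, (1 + t) = 1/2 := by
      rw [intervalIntegral.integral_add (by simp) (by simp)]; simp; norm_num
    have h2 : ∫ t in (0:ℝ)..1, (1 - t) = 1/2 := by
      rw [intervalIntegral.integral_sub (by simp) (by simp)]; simp; norm_num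
    have h1' : ∫ t in (-1:ℝ)..0, (1 + (t:ℂ)) = ((1/2:ℝ):ℂ) := by
      rw [← h1, ← intervalIntegral.integral_ofReal]; simp
    have h2' : ∫ t in (0:ℝ)..1, (1 - (t:ℂ)) = ((1/2:ℝ):ℂ) := by
      rw [← h2, ← intervalIntegral.integral_ofReal]; simp
    simp only [Complex.ofReal_zero, mul_zero, zero_mul, Complex.exp_zero, mul_one, h1', h2', fejK]
    norm_num
  · set a : ℂ := Complex.I * v with ha
    have ha0 : a ≠ 0 := by simp [ha, hv]
    have d0 : ∀ t : ℝ, HasDerivAt (fun t : ℝ => Complex.exp (a * t)) (Complex.exp (a * t) * a) t := by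
      intro t
      have := ((hasDerivAt_id (t:ℂ)).const_mul a).cexp.comp_ofReal
      simpa using this
    have dt : ∀ t : ℝ, HasDerivAt (fun t : ℝ => (t:ℂ)) 1 t := fun t => (hasDerivAt_id (t:ℂ)).comp_ofReal
    have i1 : ∫ t in (-1:ℝ)..0, (1 + (t:ℂ)) * Complex.exp (a * t) = 1/a - 1/a^2 + Complex.exp (-a)/a^2 := by
      rw [intervalIntegral.integral_eq_sub_of_hasDerivAt
        (f := fun t : ℝ => (1 + (t:ℂ)) * Complex.exp (a*t) / a - Complex.exp (a*t) / a^2)]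
      · simp; try ring
      · intro t _
        convert! ((((dt t).const_add 1).mul (d0 t)).div_const a).sub ((d0 t).div_const (a^2)) using 1
        field_simp; ring
      · exact Continuous.intervalIntegrable (by fun_prop) _ _
    have i2 : ∫ t in (0:ℝ)..1, (1 - (t:ℂ)) * Complex.exp (a * t) = Complex.exp a/a^2 - 1/a - 1/a^2 := by
      rw [intervalIntegral.integral_eq_sub_of_hasDerivAt
        (f := fun t : ℝ => (1 - (t:ℂ)) * Complex.exp (a*t) / a + Complex.exp (a*t) / a^2)]
      · simp; try ring
      · intro t _
        convert! ((((dt t).const_sub 1).mul (d0 t)).div_const a).add ((d0 t).div_const (a^2)) using 1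
        field_simp; ring
      · exact Continuous.intervalIntegrable (by fun_prop) _ _
    rw [i1, i2]
    have hk : fejK v = 2 * (1 - Real.cos v) / v^2 := by
      rw [← fejK_mul_sq]; field_simp
    have hv' : (v:ℂ) ≠ 0 := by exact_mod_cast hv
    have ha2 : a^2 = - (v:ℂ)^2 := by rw [ha, mul_pow, Complex.I_sq]; ring
    rw [hk]; push_cast
    rw [show (1/a - 1/a^2 + Complex.exp (-a)/a^2 + (Complex.exp a/a^2 - 1/a - 1/a^2)) =
      (Complex.exp (-a) + Complex.exp a - 2) / a^2 by ring, ha2, Complex.cos, ha,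
      mul_comm (v:ℂ) Complex.I]
    field_simp
    ring

lemma integrable_mul_exp {F : ℝ → ℝ} {C : ℝ} (hm : Measurable F) (h0 : ∀ u ≤ 0, F u = 0)
    (hb : ∀ u, |F u| ≤ C) {z : ℂ} (hz : 0 < z.re) :
    Integrable fun u : ℝ => (F u : ℂ) * Complex.exp (-z * u) := by
  have hi : Integrable ((Set.Ioi (0:ℝ)).indicator fun u => C * Real.exp (-z.re * u)) := by
    rw [integrable_indicator_iff measurableSet_Ioi]
    exact (integrableOn_exp_mul_Ioi (by linarith) 0).const_mul C
  refine hi.mono' ?_ (Eventually.of_forall fun u => ?_)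
  · refine Measurable.aestronglyMeasurable ?_
    exact (Complex.measurable_ofReal.comp hm).mul (Continuous.measurable (by fun_prop))
  · rcases le_or_gt u 0 with hu | hu
    · simp [h0 u hu, Set.indicator, not_lt.2 hu]
    · rw [Set.indicator_of_mem (Set.mem_Ioi.2 hu), norm_mul, Complex.norm_exp, Complex.norm_real]
      have : (-z * (u:ℂ)).re = -z.re * u := by simp
      rw [this]
      exact mul_le_mul_of_nonneg_right (hb u) (Real.exp_pos _).le

lemma tauber_fubini {F : ℝ → ℝ} {C : ℝ} (hm : Measurable F) (h0 : ∀ u ≤ 0, F u = 0)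
    (hb : ∀ u, |F u| ≤ C) {G : ℂ → ℂ}
    (hGL : ∀ z : ℂ, 0 < z.re → ∫ u : ℝ, (F u : ℂ) * Complex.exp (-z * u) = G z)
    (T y : ℝ) {σ : ℝ} (hσ : 0 < σ) :
    ∫ u : ℝ, (F u : ℂ) * Complex.exp (-(σ:ℂ) * u) * (fejK (T * (y - u)) : ℂ) =
      ∫ t : ℝ, (hatF t : ℂ) * Complex.exp (Complex.I * t * (T * y)) * G (σ + Complex.I * t * T) := by
  have hF := integrable_mul_exp hm h0 hb (z := σ) (by simpa using hσ)
  have hh : Integrable fun t : ℝ => (hatF t : ℂ) := integrable_hatF.ofReal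
  have hint : Integrable (Function.uncurry fun u t : ℝ => (F u : ℂ) * Complex.exp (-(σ:ℂ) * u) *
      ((hatF t : ℂ) * Complex.exp (Complex.I * t * ((T * (y - u) : ℝ) : ℂ)))) (volume.prod volume) := by
    refine (hF.mul_prod hh).mono ?_ (Eventually.of_forall fun p => ?_)
    · refine Measurable.aestronglyMeasurable ?_
      have h1 : Measurable fun p : ℝ × ℝ => (F p.1 : ℂ) :=
        Complex.measurable_ofReal.comp (hm.comp measurable_fst)
      have := continuous_hatF
      have h2 : Measurable fun p : ℝ × ℝ => Complex.exp (-(σ:ℂ) * p.1) *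
        ((hatF p.2 : ℂ) * Complex.exp (Complex.I * p.2 * ((T * (y - p.1) : ℝ) : ℂ))) :=
        Continuous.measurable (by fun_prop)
      convert! h1.mul h2 using 1
      ext p; simp only [Function.uncurry, Pi.mul_apply]; ring
    · simp only [Function.uncurry, norm_mul]
      have : ‖Complex.exp (Complex.I * p.2 * ((T * (y - p.1) : ℝ) : ℂ))‖ = 1 := by
        rw [show Complex.I * p.2 * ((T * (y - p.1) : ℝ) : ℂ) = ((p.2 * (T * (y - p.1)) : ℝ) : ℂ) * Complex.I by
          push_cast; ring]
        exact Complex.norm_exp_ofReal_mul_I _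
      rw [this, mul_one]
  calc _ = ∫ u : ℝ, ∫ t : ℝ, (F u : ℂ) * Complex.exp (-(σ:ℂ) * u) *
      ((hatF t : ℂ) * Complex.exp (Complex.I * t * ((T * (y - u) : ℝ) : ℂ))) := by
        refine integral_congr_ae (Eventually.of_forall fun u => ?_)
        simp only
        rw [integral_const_mul, fourier_hatF]
    _ = ∫ t : ℝ, ∫ u : ℝ, (F u : ℂ) * Complex.exp (-(σ:ℂ) * u) *
      ((hatF t : ℂ) * Complex.exp (Complex.I * t * ((T * (y - u) : ℝ) : ℂ))) :=
        integral_integral_swap hint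
    _ = _ := by
        refine integral_congr_ae (Eventually.of_forall fun t => ?_)
        simp only
        rw [← hGL _ (by simp [hσ]), ← integral_const_mul]
        refine integral_congr_ae (Eventually.of_forall fun u => ?_)
        simp only
        have : Complex.exp (-(σ:ℂ) * u) * Complex.exp (Complex.I * t * ((T * (y - u) : ℝ) : ℂ)) =
          Complex.exp (Complex.I * t * (T * y)) * Complex.exp (-(σ + Complex.I * t * T) * u) := by
          rw [← Complex.exp_add, ← Complex.exp_add]; push_cast; ring_nf
        linear_combination (F u * hatF t : ℂ) * this

lemma tauber_limit {F : ℝ → ℝ} {C : ℝ} (hm : Measurable F) (h0 : ∀ u ≤ 0, F u = 0)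
    (hb : ∀ u, |F u| ≤ C) {G : ℂ → ℂ} (hG : ContinuousOn G {z | 0 ≤ z.re})
    (hGL : ∀ z : ℂ, 0 < z.re → ∫ u : ℝ, (F u : ℂ) * Complex.exp (-z * u) = G z)
    {T : ℝ} (hT : 0 < T) (y : ℝ) :
    ((∫ u : ℝ, F u * fejK (T * (y - u)) : ℝ) : ℂ) =
      ∫ t : ℝ, (hatF t : ℂ) * Complex.exp (Complex.I * t * (T * y)) * G (Complex.I * t * T) := by
  have hC : 0 ≤ C := (abs_nonneg _).trans (hb 0)
  have hK : Integrable fun u : ℝ => fejK (T * (y - u)) :=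
    (integrable_fejK.comp_mul_left' hT.ne').comp_sub_left y
  have hl : Tendsto (fun σ : ℝ => ∫ u : ℝ, (F u : ℂ) * Complex.exp (-(σ:ℂ) * u) * (fejK (T * (y - u)) : ℂ))
      (𝓝[>] 0) (𝓝 (∫ u : ℝ, ((F u * fejK (T * (y - u)) : ℝ) : ℂ))) := by
    refine tendsto_integral_filter_of_dominated_convergence (fun u => C * fejK (T * (y - u))) ?_ ?_
      (hK.const_mul C) ?_
    · refine Eventually.of_forall fun σ => Measurable.aestronglyMeasurable ?_
      have := continuous_fejK
      exact ((Complex.measurable_ofReal.comp hm).mul (Continuous.measurable (by fun_prop))).mul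
        (Continuous.measurable (by fun_prop))
    · filter_upwards [self_mem_nhdsWithin] with σ hσ
      refine Eventually.of_forall fun u => ?_
      rw [norm_mul, norm_mul, Complex.norm_real, Complex.norm_real, Complex.norm_exp,
        Real.norm_of_nonneg (fejK_nonneg _)]
      refine mul_le_mul_of_nonneg_right ?_ (fejK_nonneg _)
      rcases le_or_gt u 0 with hu | hu
      · simpa [h0 u hu] using hC
      · have h1 : (-(σ:ℂ) * u).re ≤ 0 := by
          simp only [Complex.mul_re, Complex.neg_re, Complex.ofReal_re, Complex.neg_im, Complex.ofReal_im]
          have : 0 < σ := hσ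
          nlinarith [mul_pos this hu]
        calc ‖F u‖ * Real.exp _ ≤ C * 1 :=
          mul_le_mul (hb u) (Real.exp_le_one_iff.2 h1) (Real.exp_pos _).le hC
          _ = C := mul_one C
    · refine Eventually.of_forall fun u => ?_
      have : Continuous fun σ : ℝ => (F u : ℂ) * Complex.exp (-(σ:ℂ) * u) * (fejK (T * (y - u)) : ℂ) := by
        fun_prop
      have := (this.tendsto 0).mono_left (nhdsWithin_le_nhds (s := Set.Ioi 0))
      simpa using this
  have hGc : ∀ σ : ℝ, 0 ≤ σ → Continuous fun t : ℝ => G (σ + Complex.I * t * T) := by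
    intro σ hσ
    refine hG.comp_continuous (by fun_prop) fun t => ?_
    simpa using hσ
  obtain ⟨M, hM⟩ : ∃ M, ∀ σ ∈ Set.Icc (0:ℝ) 1, ∀ t ∈ Set.Icc (-1:ℝ) 1, ‖G (σ + Complex.I * t * T)‖ ≤ M := by
    have hc : ContinuousOn (fun p : ℝ × ℝ => G (p.1 + Complex.I * p.2 * T)) (Set.Icc (0:ℝ) 1 ×ˢ Set.Icc (-1:ℝ) 1) := by
      refine hG.comp (Continuous.continuousOn (by fun_prop)) fun p hp => ?_
      simpa using hp.1.1
    obtain ⟨M, hM⟩ := (isCompact_Icc.prod isCompact_Icc).exists_bound_of_continuousOn hc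
    exact ⟨M, fun σ hσ t ht => hM (σ, t) ⟨hσ, ht⟩⟩
  have hr : Tendsto (fun σ : ℝ => ∫ t : ℝ, (hatF t : ℂ) * Complex.exp (Complex.I * t * (T * y)) * G (σ + Complex.I * t * T))
      (𝓝[>] 0) (𝓝 (∫ t : ℝ, (hatF t : ℂ) * Complex.exp (Complex.I * t * (T * y)) * G (Complex.I * t * T))) := by
    refine tendsto_integral_filter_of_dominated_convergence (fun t => hatF t * M) ?_ ?_
      (integrable_hatF.mul_const M) ?_
    · filter_upwards [self_mem_nhdsWithin] with σ hσ
      refine Continuous.aestronglyMeasurable ?_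
      have := continuous_hatF
      exact Continuous.mul (by fun_prop) (hGc σ (le_of_lt hσ))
    · filter_upwards [Ioc_mem_nhdsGT (zero_lt_one' ℝ)] with σ hσ
      refine Eventually.of_forall fun t => ?_
      have hn : ‖Complex.exp (Complex.I * t * (T * y))‖ = 1 := by
        rw [show Complex.I * t * (T * y) = ((t * (T * y) : ℝ) : ℂ) * Complex.I by
          push_cast; ring]
        exact Complex.norm_exp_ofReal_mul_I _
      rw [norm_mul, norm_mul, hn, mul_one, Complex.norm_real, Real.norm_of_nonneg (hatF_nonneg _)]
      by_cases ht : |t| ≤ 1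
      · exact mul_le_mul_of_nonneg_left (hM σ ⟨hσ.1.le, hσ.2⟩ t ⟨(abs_le.1 ht).1, (abs_le.1 ht).2⟩)
          (hatF_nonneg _)
      · rw [hatF_eq_zero (by linarith)]; simp
    · refine Eventually.of_forall fun t => Tendsto.const_mul _ ?_
      have hw : ContinuousWithinAt G {z | 0 ≤ z.re} (Complex.I * t * T) := hG _ (by simp)
      refine hw.tendsto.comp (tendsto_nhdsWithin_iff.2 ⟨?_, ?_⟩)
      · have : Continuous fun σ : ℝ => (σ : ℂ) + Complex.I * t * T := by fun_prop
        have := (this.tendsto 0).mono_left (nhdsWithin_le_nhds (s := Set.Ioi 0))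
        simpa using this
      · filter_upwards [self_mem_nhdsWithin] with σ hσ
        have : (0:ℝ) < σ := hσ
        simpa using this.le
  refine (integral_ofReal (𝕜 := ℂ)).symm.trans ?_
  refine tendsto_nhds_unique hl (hr.congr' ?_)
  filter_upwards [self_mem_nhdsWithin] with σ hσ
  exact (tauber_fubini hm h0 hb hGL T y hσ).symm

lemma tauber_tendsto {F : ℝ → ℝ} {C : ℝ} (hm : Measurable F) (h0 : ∀ u ≤ 0, F u = 0)
    (hb : ∀ u, |F u| ≤ C) {G : ℂ → ℂ} (hG : ContinuousOn G {z | 0 ≤ z.re})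
    (hGL : ∀ z : ℂ, 0 < z.re → ∫ u : ℝ, (F u : ℂ) * Complex.exp (-z * u) = G z)
    {T : ℝ} (hT : 0 < T) :
    Tendsto (fun y => ∫ v : ℝ, F (y - v / T) * fejK v) atTop (𝓝 0) := by
  have hrl := Real.tendsto_integral_exp_smul_cocompact (fun t : ℝ => (hatF t : ℂ) * G (Complex.I * t * T))
  have hlin : Tendsto (fun y : ℝ => (-(T / (2 * Real.pi))) * y) atTop (cocompact ℝ) := by
    refine Tendsto.mono_right (tendsto_id.const_mul_atTop_of_neg ?_) atBot_le_cocompact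
    have := Real.pi_pos
    have : 0 < T / (2 * Real.pi) := by positivity
    linarith
  have h1 := hrl.comp hlin
  have h2 : Tendsto (fun y => ((∫ u : ℝ, F u * fejK (T * (y - u)) : ℝ) : ℂ)) atTop (𝓝 0) := by
    refine h1.congr fun y => ?_
    rw [tauber_limit hm h0 hb hG hGL hT y]
    simp only [Function.comp]
    refine integral_congr_ae (Eventually.of_forall fun t => ?_)
    simp only [Circle.smul_def, Real.fourierChar_apply, smul_eq_mul]
    have : ((2 * Real.pi * -(t * (-(T / (2 * Real.pi)) * y)) : ℝ) : ℂ) * Complex.I = Complex.I * t * (T * y) := by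
      have := Real.pi_ne_zero
      rw [show 2 * Real.pi * -(t * (-(T / (2 * Real.pi)) * y)) = t * (T * y) by field_simp]
      push_cast; ring
    rw [this]; ring
  have h3 : Tendsto (fun y => (∫ u : ℝ, F u * fejK (T * (y - u)))) atTop (𝓝 0) := by
    have := (Complex.continuous_re.tendsto 0).comp h2
    simpa [Function.comp_def] using this
  have h4 := h3.const_mul T
  rw [mul_zero] at h4
  refine h4.congr fun y => ?_
  have e1 : ∫ u : ℝ, F u * fejK (T * (y - u)) = ∫ u : ℝ, F (y - u) * fejK (T * u) := by
    rw [← integral_sub_left_eq_self _ volume y]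
    simp
  have e2 := Measure.integral_comp_mul_left (fun v => F (y - v / T) * fejK v) T
  simp only [mul_div_cancel_left₀ _ hT.ne'] at e2
  rw [e1, e2, abs_of_pos (inv_pos.2 hT), smul_eq_mul]
  field_simp

lemma avg_contra {F : ℝ → ℝ} {C : ℝ} (hm : Measurable F) (hb : ∀ u, |F u| ≤ C)
    (ht : ∀ T : ℝ, 0 < T → Tendsto (fun y => ∫ v : ℝ, F (y - v / T) * fejK v) atTop (𝓝 0))
    {m h : ℝ} (hmp : 0 < m) (hh : 0 < h) :
    ∀ᶠ y in atTop, ¬ ∀ u ∈ Set.Icc (y - h) (y + h), m ≤ F u := by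
  set c := ∫ v, fejK v with hc
  have hcp : 0 < c := integral_fejK_pos
  have hC : 0 ≤ C := (abs_nonneg _).trans (hb 0)
  have hA : Tendsto (fun A : ℝ => -C * c + (C + m) * ∫ v in (-A)..A, fejK v) atTop (𝓝 (-C * c + (C + m) * c)) :=
    ((intervalIntegral_tendsto_integral integrable_fejK tendsto_neg_atTop_atBot tendsto_id).const_mul _).const_add _
  have hev : ∀ᶠ A : ℝ in atTop, m * c / 2 < -C * c + (C + m) * ∫ v in (-A)..A, fejK v :=
    hA.eventually_const_lt (by nlinarith [mul_pos hmp hcp])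
  obtain ⟨A, hA1, hA0⟩ := (hev.and (eventually_gt_atTop 0)).exists
  have hTp : 0 < A / h := by positivity
  filter_upwards [(ht (A / h) hTp).eventually_lt_const (show 0 < m * c / 2 by positivity)] with y hy hall
  have hlow : -C * c + (C + m) * ∫ v in (-A)..A, fejK v ≤ ∫ v : ℝ, F (y - v / (A/h)) * fejK v := by
    rw [intervalIntegral.integral_of_le (by linarith), ← integral_indicator measurableSet_Ioc, hc,
      ← integral_const_mul, ← integral_const_mul, ← integral_add (integrable_fejK.const_mul _)
        ((integrable_fejK.indicator measurableSet_Ioc).const_mul _)]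
    refine integral_mono ((integrable_fejK.const_mul _).add
        ((integrable_fejK.indicator measurableSet_Ioc).const_mul _)) ?_ fun v => ?_
    · refine Integrable.bdd_mul (c := C) integrable_fejK ?_ (Eventually.of_forall fun v => hb _)
      exact (hm.comp (by fun_prop)).aestronglyMeasurable
    · simp only
      by_cases hv : v ∈ Set.Ioc (-A) A
      · rw [Set.indicator_of_mem hv]
        have : m ≤ F (y - v / (A/h)) := by
          apply hall
          have h1 : v / (A/h) ≤ h := by
            rw [div_le_iff₀ hTp]; field_simp; exact hv.2
          have h2 : -h ≤ v / (A/h) := by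
            rw [le_div_iff₀ hTp]; field_simp; linarith [hv.1]
          constructor <;> linarith
        nlinarith [fejK_nonneg v]
      · rw [Set.indicator_of_notMem hv]
        have := (abs_le.1 (hb (y - v / (A/h)))).1
        nlinarith [fejK_nonneg v]
  linarith

theorem tauber {F : ℝ → ℝ} {C : ℝ} (hm : Measurable F) (h0 : ∀ u ≤ 0, F u = 0)
    (hb : ∀ u, |F u| ≤ C) {G : ℂ → ℂ} (hG : ContinuousOn G {z | 0 ≤ z.re})
    (hGL : ∀ z : ℂ, 0 < z.re → ∫ u : ℝ, (F u : ℂ) * Complex.exp (-z * u) = G z)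
    (hmono : ∀ u w : ℝ, 0 < u → u ≤ w → (F u + 1) * Real.exp u ≤ (F w + 1) * Real.exp w) :
    Tendsto F atTop (𝓝 0) := by
  have ht := fun (T : ℝ) (hT : 0 < T) => tauber_tendsto hm h0 hb hG hGL hT
  have ht' : ∀ T : ℝ, 0 < T → Tendsto (fun y => ∫ v : ℝ, (-F) (y - v / T) * fejK v) atTop (𝓝 0) := by
    intro T hT
    have := (ht T hT).neg
    simpa [integral_neg] using this
  rw [Metric.tendsto_nhds]
  intro ε hε
  set η := min ε (1/2) with hη
  have hη0 : 0 < η := by positivity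
  have hη1 : η ≤ 1/2 := min_le_right _ _
  have hηε : η ≤ ε := min_le_left _ _
  have hq : 1 < (1 + η) / (1 + η/2) := by rw [one_lt_div (by positivity)]; linarith
  set h := Real.log ((1 + η) / (1 + η/2)) / 2 with hh
  have hh0 : 0 < h := by have := Real.log_pos hq; positivity
  have hexp : Real.exp (2 * h) = (1 + η) / (1 + η/2) := by
    rw [hh, mul_div_cancel₀ _ (by norm_num : (2:ℝ) ≠ 0), Real.exp_log (by positivity)]
  have hexp' : Real.exp (2 * h) * (1 + η/2) = 1 + η := by rw [hexp]; field_simp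
  have A1 := avg_contra hm hb ht (half_pos hη0) hh0
  have A2 := avg_contra (F := -F) hm.neg (fun u => by simpa using hb u) ht' (half_pos hη0) hh0
  have B1 := (tendsto_atTop_add_const_right atTop h tendsto_id).eventually A1
  have B2 := (tendsto_atTop_add_const_right atTop (-h) tendsto_id).eventually A2
  filter_upwards [B1, B2, eventually_gt_atTop (2 * h)] with y h1 h2 hy
  simp only [id] at h1 h2
  rw [Real.dist_eq, sub_zero]
  refine lt_of_lt_of_le ?_ hηε
  rw [abs_lt]
  constructor
  · by_contra hcon
    push Not at hcon
    apply h2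
    intro u hu
    have hu1 : u ≤ y := by linarith [hu.2]
    have hu2 : y - 2 * h ≤ u := by linarith [hu.1]
    have hmn := hmono u y (by linarith) hu1
    have e1 : Real.exp y ≤ Real.exp (2*h) * Real.exp u := by
      rw [← Real.exp_add]; exact Real.exp_le_exp.2 (by linarith)
    have e2 : (F u + 1) * Real.exp u ≤ (1 - η) * Real.exp (2*h) * Real.exp u := by
      calc _ ≤ (F y + 1) * Real.exp y := hmn
        _ ≤ (1 - η) * Real.exp y := mul_le_mul_of_nonneg_right (by linarith) (Real.exp_pos _).le
        _ ≤ (1 - η) * (Real.exp (2*h) * Real.exp u) := mul_le_mul_of_nonneg_left e1 (by linarith)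
        _ = _ := by ring
    have e3 := le_of_mul_le_mul_right e2 (Real.exp_pos u)
    have e4 : (1 - η) * Real.exp (2*h) ≤ 1 - η/2 := by
      rw [hexp, ← mul_div_assoc, div_le_iff₀ (by positivity)]; nlinarith
    simp only [Pi.neg_apply]; linarith
  · by_contra hcon
    push Not at hcon
    apply h1
    intro u hu
    have hu1 : y ≤ u := by linarith [hu.1]
    have hu2 : u ≤ y + 2 * h := by linarith [hu.2]
    have hmn := hmono y u (by linarith) hu1
    have e1 : Real.exp u ≤ Real.exp (2*h) * Real.exp y := by
      rw [← Real.exp_add]; exact Real.exp_le_exp.2 (by linarith)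
    by_contra hlt
    push Not at hlt
    have e2 : (1 + η) * Real.exp y < (1 + η) * Real.exp y := by
      calc (1 + η) * Real.exp y ≤ (F y + 1) * Real.exp y := mul_le_mul_of_nonneg_right (by linarith) (Real.exp_pos _).le
        _ ≤ (F u + 1) * Real.exp u := hmn
        _ < (1 + η/2) * Real.exp u := mul_lt_mul_of_pos_right (by linarith) (Real.exp_pos _)
        _ ≤ (1 + η/2) * (Real.exp (2*h) * Real.exp y) := mul_le_mul_of_nonneg_left e1 (by positivity)
        _ = (1 + η) * Real.exp y := by rw [← hexp']; ring
    exact lt_irrefl _ e2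

noncomputable def pntF (u : ℝ) : ℝ :=
  if 0 < u then Chebyshev.psi (Real.exp u) * Real.exp (-u) - 1 else 0

lemma measurable_pntF : Measurable pntF := by
  unfold pntF
  refine Measurable.ite measurableSet_Ioi ?_ measurable_const
  exact ((Chebyshev.psi_mono.measurable.comp Real.measurable_exp).mul
    (by fun_prop)).sub_const 1

lemma pntF_bound (u : ℝ) : |pntF u| ≤ Real.log 4 + 5 := by
  have hl : 0 < Real.log 4 := Real.log_pos (by norm_num)
  unfold pntF
  split_ifs with h
  · have h1 := Chebyshev.psi_nonneg (Real.exp u)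
    have h2 := Chebyshev.psi_le_const_mul_self (Real.exp_pos u).le
    have h3 : Chebyshev.psi (Real.exp u) * Real.exp (-u) ≤ Real.log 4 + 4 := by
      rw [Real.exp_neg, ← div_eq_mul_inv, div_le_iff₀ (Real.exp_pos u)]; exact h2
    have h4 : 0 ≤ Chebyshev.psi (Real.exp u) * Real.exp (-u) := by positivity
    rw [abs_le]; constructor <;> linarith
  · simp; linarith

lemma pntF_mono (u w : ℝ) (hu : 0 < u) (huw : u ≤ w) :
    (pntF u + 1) * Real.exp u ≤ (pntF w + 1) * Real.exp w := by
  have key : ∀ x : ℝ, 0 < x → (pntF x + 1) * Real.exp x = Chebyshev.psi (Real.exp x) := by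
    intro x hx
    rw [pntF, if_pos hx, sub_add_cancel, mul_assoc, ← Real.exp_add]; simp
  rw [key u hu, key w (hu.trans_le huw)]
  exact Chebyshev.psi_mono (Real.exp_le_exp.2 huw)

noncomputable def pntAux (s : ℂ) : ℂ :=
  ArithmeticFunction.vonMangoldt.LFunctionResidueClassAux (q := 1) 1 s

lemma continuousOn_pntAux : ContinuousOn pntAux {s | 1 ≤ s.re} :=
  ArithmeticFunction.vonMangoldt.continuousOn_LFunctionResidueClassAux _

lemma pntAux_eq {s : ℂ} (hs : 1 < s.re) :
    LSeries (fun n => ((ArithmeticFunction.vonMangoldt n : ℝ) : ℂ)) s = pntAux s + 1 / (s - 1) := by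
  have := ArithmeticFunction.vonMangoldt.eqOn_LFunctionResidueClassAux (q := 1) (a := 1) isUnit_one hs
  rw [pntAux, this]
  have hr : ∀ n : ℕ, ArithmeticFunction.vonMangoldt.residueClass (1 : ZMod 1) n = ArithmeticFunction.vonMangoldt n := by
    intro n
    apply Set.indicator_of_mem
    exact Subsingleton.elim (α := ZMod 1) _ _
  simp [hr]

lemma LSeries_eq_integral_psi {s : ℂ} (hs : 1 < s.re) :
    LSeries (fun n => ((ArithmeticFunction.vonMangoldt n : ℝ) : ℂ)) s =
      s * ∫ u in Set.Ioi (0:ℝ), (Chebyshev.psi (Real.exp u) : ℂ) * Complex.exp (-s * u) := by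
  rw [LSeries_eq_mul_integral_of_nonneg (fun n => ArithmeticFunction.vonMangoldt n) zero_le_one hs ?_
    (fun n => ArithmeticFunction.vonMangoldt_nonneg)]
  · congr 1
    have him : Real.exp '' Set.Ioi (0:ℝ) = Set.Ioi 1 := by
      ext x
      simp only [Set.mem_image, Set.mem_Ioi]
      constructor
      · rintro ⟨u, hu, rfl⟩; exact Real.one_lt_exp_iff.2 hu
      · intro hx; exact ⟨Real.log x, Real.log_pos hx, Real.exp_log (by linarith)⟩
    rw [← him, integral_image_eq_integral_abs_deriv_smul measurableSet_Ioi
      (fun x _ => (Real.hasDerivAt_exp x).hasDerivWithinAt) Real.exp_injective.injOn]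
    refine setIntegral_congr_fun measurableSet_Ioi fun u _ => ?_
    have e1 : (∑ k ∈ Finset.Icc 1 ⌊Real.exp u⌋₊, ((ArithmeticFunction.vonMangoldt k : ℝ) : ℂ)) =
        (Chebyshev.psi (Real.exp u) : ℂ) := by
      rw [Chebyshev.psi]; push_cast; rfl
    have e2 : ((Real.exp u : ℝ) : ℂ) ^ (-(s + 1)) = Complex.exp (-(s+1) * u) := by
      rw [Complex.ofReal_exp, Complex.cpow_def_of_ne_zero (Complex.exp_ne_zero _),
        ← Complex.ofReal_exp, ← Complex.ofReal_log (Real.exp_pos u).le, Real.log_exp, mul_comm]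
    simp only [e1, e2, abs_of_pos (Real.exp_pos u), Complex.real_smul]
    rw [Complex.ofReal_exp, show -s * (u:ℂ) = u + -(s+1) * u by ring, Complex.exp_add]
    ring
  · refine Asymptotics.IsBigO.of_bound (Real.log 4 + 4) (Eventually.of_forall fun n => ?_)
    have h := Chebyshev.psi_le_const_mul_self (Nat.cast_nonneg (α := ℝ) n)
    have h0 := Chebyshev.psi_nonneg n
    have : Chebyshev.psi n = ∑ k ∈ Finset.Icc 1 n, ArithmeticFunction.vonMangoldt k := by
      rw [Chebyshev.psi, Nat.floor_natCast]; rfl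
    rw [← this, Real.rpow_one, Real.norm_of_nonneg h0, Real.norm_of_nonneg (Nat.cast_nonneg _)]
    exact h

lemma laplace_pntF (z : ℂ) (hz : 0 < z.re) :
    ∫ u : ℝ, (pntF u : ℂ) * Complex.exp (-z * u) = (pntAux (1 + z) - 1) / (1 + z) := by
  have hF := integrable_mul_exp (F := pntF) measurable_pntF (fun u hu => if_neg (not_lt.2 hu)) pntF_bound hz
  have hE := integrableOn_exp_mul_complex_Ioi (a := -z) (by simpa using hz) 0
  have hEi := integral_exp_mul_complex_Ioi (a := -z) (by simpa using hz) 0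
  have hs : 1 < (1 + z).re := by simpa using hz
  have h1 : ∫ u : ℝ, (pntF u : ℂ) * Complex.exp (-z * u) =
      ∫ u in Set.Ioi (0:ℝ), (pntF u : ℂ) * Complex.exp (-z * u) := by
    rw [setIntegral_eq_integral_of_forall_compl_eq_zero]
    intro u hu
    simp only [Set.mem_Ioi] at hu
    simp [pntF, hu]
  have h2 := integral_add hF.integrableOn hE
  have h3 : ∫ u in Set.Ioi (0:ℝ), ((pntF u : ℂ) * Complex.exp (-z * u) + Complex.exp (-z * u)) =
      ∫ u in Set.Ioi (0:ℝ), (Chebyshev.psi (Real.exp u) : ℂ) * Complex.exp (-(1 + z) * u) := by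
    refine setIntegral_congr_fun measurableSet_Ioi fun u hu => ?_
    simp only [pntF, if_pos (Set.mem_Ioi.1 hu)]
    push_cast
    rw [show -(1 + z) * (u:ℂ) = -u + -z * u by ring, Complex.exp_add]
    ring
  have h4 := LSeries_eq_integral_psi hs
  rw [pntAux_eq hs] at h4
  have hz0 : z ≠ 0 := by rintro rfl; simp at hz
  have hs0 : 1 + z ≠ 0 := by intro h; rw [h] at hs; simp at hs; linarith
  rw [h3, ← h1, hEi] at h2
  simp only [Complex.ofReal_zero, mul_zero, Complex.exp_zero] at h2
  rw [h2] at h4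
  rw [eq_div_iff hs0]
  rw [show (1 + z - 1 : ℂ) = z by ring, neg_div_neg_eq] at h4
  have h6 : z * (1 / z) = 1 := mul_one_div_cancel hz0
  linear_combination -h4 - h6

theorem tendsto_pntF : Tendsto pntF atTop (𝓝 0) := by
  refine tauber measurable_pntF (fun u hu => if_neg (not_lt.2 hu)) pntF_bound
    (G := fun z => (pntAux (1 + z) - 1) / (1 + z)) ?_ laplace_pntF pntF_mono
  refine ContinuousOn.div ?_ (by fun_prop) fun z hz h => ?_
  · refine ContinuousOn.sub (continuousOn_pntAux.comp (by fun_prop) fun z hz => ?_) continuousOn_const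
    simpa using hz
  · have h1 : (1 + z).re = 0 := by rw [h]; simp
    have h2 : 0 ≤ z.re := hz
    simp at h1; linarith

theorem tendsto_theta_div : Tendsto (fun x => Chebyshev.theta x / x) atTop (𝓝 1) := by
  have h1 : Tendsto (fun x => Chebyshev.psi x / x) atTop (𝓝 1) := by
    have := (tendsto_pntF.comp Real.tendsto_log_atTop).add_const 1
    rw [zero_add] at this
    refine this.congr' ?_
    filter_upwards [eventually_gt_atTop 1] with x hx
    have hx0 : 0 < x := by linarith
    simp only [Function.comp, pntF, if_pos (Real.log_pos hx), Real.exp_neg, Real.exp_log hx0]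
    ring
  obtain ⟨C, hC⟩ := Chebyshev.psi_sub_theta_le_mul_sqrt
  have h2 : Tendsto (fun x => (Chebyshev.psi x - Chebyshev.theta x) / x) atTop (𝓝 0) := by
    have h3 : Tendsto (fun x : ℝ => C * (Real.sqrt x)⁻¹) atTop (𝓝 0) := by
      have := (tendsto_inv_atTop_zero.comp Real.tendsto_sqrt_atTop).const_mul C
      simpa using this
    refine tendsto_of_tendsto_of_tendsto_of_le_of_le' tendsto_const_nhds h3 ?_ ?_
    · filter_upwards [eventually_gt_atTop 0] with x hx
      have := Chebyshev.theta_le_psi x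
      exact div_nonneg (by linarith) hx.le
    · filter_upwards [eventually_gt_atTop 0] with x hx
      rw [div_le_iff₀ hx]
      refine (hC x).trans (le_of_eq ?_)
      have hs : 0 < Real.sqrt x := Real.sqrt_pos.2 hx
      have : x = Real.sqrt x * Real.sqrt x := (Real.mul_self_sqrt hx.le).symm
      conv_rhs => rw [this, Real.sqrt_mul_self hs.le]
      field_simp
  have := h1.sub h2
  rw [sub_zero] at this
  refine this.congr fun x => ?_
  ring

theorem exists_prime_in_log_window (ε : ℝ) (hε : 0 < ε) :
    ∃ R : ℕ, ∀ r : ℕ, R ≤ r →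
      ∃ l : ℕ, l.Prime ∧ Real.log r < l ∧ (l : ℝ) ≤ (2 + ε) * Real.log r ∧ ¬ l ∣ r := by
  set δ := ε / (2 * (3 + ε)) with hδ
  have hδ0 : 0 < δ := by positivity
  have hδe : δ * (3 + ε) = ε / 2 := by rw [hδ]; field_simp
  have hL : Tendsto (fun r : ℕ => Real.log r) atTop atTop :=
    Real.tendsto_log_atTop.comp tendsto_natCast_atTop_atTop
  have hL2 : Tendsto (fun r : ℕ => (2 + ε) * Real.log r) atTop atTop :=
    hL.const_mul_atTop (by positivity)
  have E1 := hL.eventually (tendsto_theta_div.eventually_lt_const (show 1 < 1 + δ by linarith))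
  have E2 := hL2.eventually (tendsto_theta_div.eventually_const_lt (show 1 - δ < 1 by linarith))
  obtain ⟨R, hR⟩ := eventually_atTop.1 ((E1.and E2).and ((hL.eventually_gt_atTop 0).and (eventually_gt_atTop 0)))
  refine ⟨R, fun r hr => ?_⟩
  obtain ⟨⟨h1, h2⟩, h3, h4⟩ := hR r hr
  by_contra hcon
  push Not at hcon
  set L := Real.log r with hLd
  have hLL : L ≤ (2 + ε) * L := by nlinarith
  rw [div_lt_iff₀ h3] at h1
  rw [lt_div_iff₀ (by positivity)] at h2
  set S := (Finset.Ioc ⌊L⌋₊ ⌊(2 + ε) * L⌋₊).filter Nat.Prime with hS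
  have hdvd : ∏ p ∈ S, p ∣ r := by
    refine Finset.prod_primes_dvd r (fun p hp => (Finset.mem_filter.1 hp).2.prime) fun p hp => ?_
    obtain ⟨hp1, hp2⟩ := Finset.mem_filter.1 hp
    rw [Finset.mem_Ioc] at hp1
    exact hcon p hp2 ((Nat.floor_lt h3.le).1 hp1.1) ((Nat.le_floor_iff (by positivity)).1 hp1.2)
  have hle : ((∏ p ∈ S, p : ℕ) : ℝ) ≤ r := by exact_mod_cast Nat.le_of_dvd h4 hdvd
  have hpos : 0 < ∏ p ∈ S, p := Finset.prod_pos fun p hp => (Finset.mem_filter.1 hp).2.pos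
  have hlog := Real.log_le_log (by exact_mod_cast hpos) hle
  rw [Nat.cast_prod, Real.log_prod (fun p hp => by
    have := (Finset.mem_filter.1 hp).2.pos
    positivity)] at hlog
  have hsplit : Chebyshev.theta ((2 + ε) * L) = Chebyshev.theta L + ∑ p ∈ S, Real.log p := by
    rw [Chebyshev.theta, Chebyshev.theta, hS, Finset.sum_filter, Finset.sum_filter, Finset.sum_filter,
      Finset.sum_Ioc_consecutive _ (Nat.zero_le _) (Nat.floor_mono hLL)]
  nlinarith
end

section
/- Let p > 2 be a fixed prime and ε > 0. Then there exists a constant C and R such that for all r ≥ R, v(p, p^r − 1) ≤ C·r^{(2+ε)·ln(p)}; i.e., v(p, p^r − 1) = O(r^{(2+ε)ln p}) as a function of r. (For p = 2 the corresponding bound is v(2, 2^r − 1) = O(r^{2+ε}).) -/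
noncomputable section WaringHelpers

open Polynomial

theorem wa_solve {F : Type*} [Field F] {n : ℕ} (v : Fin n → F) (hv : Function.Injective v)
    (j : Fin n) : (∃ c : Fin n → F, ∀ i : Fin n, ∑ m, c m * v m ^ (i : ℕ) = if i = j then 1 else 0) ∧
      (∃ d : Fin n → F, ∀ i : Fin n, ∑ m, d m * v i ^ (m : ℕ) = if i = j then 1 else 0) := by
  have hdet : IsUnit (Matrix.vandermonde v).det :=
    isUnit_iff_ne_zero.mpr (Matrix.det_vandermonde_ne_zero_iff.mpr hv)
  constructor
  · refine ⟨fun m => (Matrix.vandermonde v)⁻¹ j m, fun i => ?_⟩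
    have h := Matrix.nonsing_inv_mul (Matrix.vandermonde v) hdet
    have h2 := congrFun (congrFun h j) i
    rw [Matrix.mul_apply, Matrix.one_apply] at h2
    simpa [Matrix.vandermonde_apply, eq_comm] using h2
  · refine ⟨fun m => (Matrix.vandermonde v)⁻¹ m j, fun i => ?_⟩
    have h := Matrix.mul_nonsing_inv (Matrix.vandermonde v) hdet
    have h2 := congrFun (congrFun h i) j
    rw [Matrix.mul_apply, Matrix.one_apply] at h2
    simpa [Matrix.vandermonde_apply, mul_comm] using h2

/-- The auxiliary polynomial in the node variable. -/
def waP {A : Type*} [CommRing A] (b : ℕ → A) (e r : ℕ) : A[X] :=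
  ∏ i ∈ Finset.range r, (1 + C (b i) * X) ^ e

theorem wa_lin {A : Type*} [CommRing A] (b : A) (e : ℕ) :
    ((1 + C b * X : A[X]) ^ e).coeff 0 = 1 ∧ ((1 + C b * X : A[X]) ^ e).coeff 1 = e * b := by
  induction e with
  | zero => simp [coeff_one]
  | succ e ih =>
    rw [pow_succ]
    refine ⟨by simp [mul_coeff_zero, ih.1], ?_⟩
    rw [mul_add, mul_one, coeff_add, ← mul_assoc, coeff_mul_X, mul_comm _ (C b), coeff_C_mul,
      ih.1, ih.2]
    push_cast
    ring

theorem waP_coeff {A : Type*} [CommRing A] (b : ℕ → A) (e r : ℕ) :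
    (waP b e r).coeff 0 = 1 ∧ (waP b e r).coeff 1 = e * ∑ i ∈ Finset.range r, b i := by
  induction r with
  | zero => simp [waP, coeff_one]
  | succ r ih =>
    have h : waP b e (r + 1) = waP b e r * (1 + C (b r) * X) ^ e := Finset.prod_range_succ _ _
    obtain ⟨h0, h1⟩ := wa_lin (b r) e
    rw [h]
    refine ⟨by rw [mul_coeff_zero, ih.1, h0, one_mul], ?_⟩
    rw [coeff_mul, Finset.Nat.antidiagonal_succ]
    simp [ih.1, ih.2, h0, h1, Finset.sum_range_succ]
    ring

theorem waP_deg {A : Type*} [CommRing A] (b : ℕ → A) (e r : ℕ) :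
    (waP b e r).natDegree ≤ r * e := by
  refine (natDegree_prod_le _ _).trans ?_
  refine (Finset.sum_le_card_nsmul _ _ e ?_).trans (by simp)
  intro i _
  refine natDegree_pow_le.trans ?_
  have : (1 + C (b i) * X : A[X]).natDegree ≤ 1 := by
    compute_degree
  nlinarith

/-- The key identity. -/
theorem wa_key (F : Type*) [Field F] [IsAlgClosed F] (p : ℕ) [Fact p.Prime] [CharP F p]
    (r : ℕ) (hr : 1 ≤ r) (f : F[X]) :
    ∃ y : Fin (r * (r * (p - 1) + 1)) → F[X], f = ∑ i, y i ^ (p ^ r - 1) := by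
  have hp : p.Prime := Fact.out
  have hp2 := hp.two_le
  set σ := r * (p - 1) with hσ
  have hσ1 : 1 ≤ σ := Nat.mul_pos hr (by omega)
  set q := p ^ (r + 1) with hq
  have hber : 1 + σ ≤ p ^ r := by
    have := one_add_mul_le_pow (R := ℤ) (a := (p : ℤ) - 1) (by omega) r
    have h2 : ((1 + σ : ℕ) : ℤ) ≤ ((p ^ r : ℕ) : ℤ) := by
      rw [hσ]; push_cast [Nat.cast_sub (show 1 ≤ p by omega)]
      simpa using this
    exact_mod_cast h2
  have hqσ : σ + 2 ≤ q := by
    rw [hq, pow_succ]; nlinarith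
  set K := ∑ i ∈ Finset.range r, q ^ i * (p - 1) with hK
  have hkpos : 0 < p ^ r - 1 := by omega
  have hdvd : (p ^ r - 1) ∣ K := by
    have h1 : p ^ r ≡ 1 [MOD (p ^ r - 1)] :=
      ((Nat.modEq_iff_dvd' (by omega)).mpr (dvd_refl _)).symm
    have h2 : q ≡ p [MOD (p ^ r - 1)] := by
      rw [hq, pow_succ]; simpa using h1.mul_right p
    have h3 : K ≡ ∑ i ∈ Finset.range r, p ^ i * (p - 1) [MOD (p ^ r - 1)] := by
      rw [hK]
      apply Nat.ModEq.sum
      intro i _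
      exact (h2.pow i).mul_right _
    have h4 : ∑ i ∈ Finset.range r, p ^ i * (p - 1) = p ^ r - 1 := by
      rw [← Finset.sum_mul]
      have := Nat.geomSum_eq hp2 r
      rw [this]
      exact Nat.div_mul_cancel (by simpa using Nat.sub_dvd_pow_sub_pow p 1 r)
    rw [h4] at h3
    exact (Nat.modEq_zero_iff_dvd).mp (h3.trans (by simp [Nat.ModEq]))
  obtain ⟨M, hM⟩ := hdvd
  have hp0 : (p : F) = 0 := CharP.cast_eq_zero F p
  have hq0 : (q : F) = 0 := by rw [hq]; push_cast; rw [hp0, zero_pow (by omega)]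
  have hqr : q ≤ q ^ r := Nat.le_self_pow (by omega) q
  have : NeZero ((q - 1 : ℕ) : F) := ⟨by
    rw [Nat.cast_sub (by omega), hq0]; simp⟩
  have : NeZero ((q ^ r - 1 : ℕ) : F) := ⟨by
    rw [Nat.cast_sub (by omega), Nat.cast_pow, hq0, zero_pow (by omega)]; simp⟩
  obtain ⟨ζ, hζ⟩ := HasEnoughRootsOfUnity.exists_primitiveRoot F (q - 1)
  obtain ⟨μ, hμ⟩ := HasEnoughRootsOfUnity.exists_primitiveRoot F (q ^ r - 1)
  have hζq : ζ ^ q = ζ := by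
    have : q = (q - 1) + 1 := by omega
    rw [this, pow_succ, hζ.pow_eq_one, one_mul]
  obtain ⟨c, hc⟩ := (wa_solve (fun m : Fin (σ + 1) => ζ ^ (m : ℕ)) (by
    intro a b hab
    exact Fin.ext (hζ.pow_inj (by omega) (by omega) hab)) ⟨1, by omega⟩).1
  obtain ⟨d, hd⟩ := (wa_solve (fun i : Fin r => μ ^ (q ^ (i : ℕ))) (by
    intro a b hab
    have hlt : ∀ a : Fin r, q ^ (a : ℕ) < q ^ r - 1 := by
      intro a
      have h1 : q ^ (a : ℕ) * q ≤ q ^ r := by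
        rw [← pow_succ]; exact Nat.pow_le_pow_right (by omega) a.2
      have h2 : 1 ≤ q ^ (a : ℕ) := Nat.one_le_pow _ _ (by omega)
      have h3 : 3 ≤ q := by omega
      have h4 : q ^ (a : ℕ) * 3 ≤ q ^ (a : ℕ) * q := Nat.mul_le_mul_left _ h3
      omega
    exact Fin.ext (Nat.pow_right_injective (by omega) (hμ.pow_inj (hlt a) (hlt b) hab)))
    ⟨0, by omega⟩).2
  -- step 1
  have step1 : ∀ g : F[X], ∑ n : Fin (σ + 1), C (c n) * (1 + C (ζ ^ (n : ℕ)) * g) ^ K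
      = ((p - 1 : ℕ) : F[X]) * ∑ i ∈ Finset.range r, g ^ (q ^ i) := by
    intro g
    have hexp : ∀ n : ℕ, (1 + C (ζ ^ n) * g) ^ K
        = ∑ j : Fin (σ + 1), (waP (fun i => g ^ (q ^ i)) (p - 1) r).coeff j * C (ζ ^ n) ^ (j : ℕ) := by
      intro n
      have h1 : (1 + C (ζ ^ n) * g) ^ K = (waP (fun i => g ^ (q ^ i)) (p - 1) r).eval (C (ζ ^ n)) := by
        rw [waP, eval_prod, hK, ← Finset.prod_pow_eq_pow_sum]
        apply Finset.prod_congr rfl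
        intro i _
        rw [pow_mul]
        have hqi : q ^ i = p ^ ((r + 1) * i) := by rw [hq, pow_mul]
        have hfix : ∀ z : F, z ^ q = z → z ^ (q ^ i) = z := by
          intro z hz
          clear hqi
          generalize i = i'
          induction i' with
          | zero => simp
          | succ i' ih => rw [pow_succ, pow_mul, ih, hz]
        have hz := hfix (ζ ^ n) (by rw [← pow_mul, mul_comm, pow_mul, hζq])
        have : (1 + C (ζ ^ n) * g) ^ (q ^ i) = 1 + g ^ (q ^ i) * C (ζ ^ n) := by
          have hadd : (1 + C (ζ ^ n) * g) ^ (q ^ i) = 1 ^ (q ^ i) + (C (ζ ^ n) * g) ^ (q ^ i) := by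
            rw [hqi]; exact add_pow_char_pow _ _ _ _
          rw [hadd, one_pow, mul_pow, ← C_pow, hz, mul_comm]
        rw [this]; simp
      rw [h1, eval_eq_sum_range' (Nat.lt_succ_of_le (waP_deg _ _ _)), Finset.sum_range]
    simp_rw [hexp, Finset.mul_sum]
    rw [Finset.sum_comm]
    have : ∀ j : Fin (σ + 1), ∑ n : Fin (σ + 1), C (c n) *
        ((waP (fun i => g ^ (q ^ i)) (p - 1) r).coeff j * C (ζ ^ (n : ℕ)) ^ (j : ℕ))
        = (waP (fun i => g ^ (q ^ i)) (p - 1) r).coeff j *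
          C (if j = ⟨1, by omega⟩ then 1 else 0) := by
      intro j
      rw [← hc j, map_sum, Finset.mul_sum]
      apply Finset.sum_congr rfl
      intro n _
      rw [C_mul, C_pow (n := (j : ℕ))]; ring
    simp_rw [this]
    rw [Finset.sum_eq_single ⟨1, by omega⟩]
    · simp [(waP_coeff _ _ _).2, Finset.mul_sum]
    · intro b _ hb; simp [hb]
    · simp
  -- step 2
  have step2 : ∑ m : Fin r, C (d m) * ∑ i ∈ Finset.range r, (C (μ ^ (m : ℕ)) * f) ^ (q ^ i) = f := by
    simp_rw [Finset.sum_range, Finset.mul_sum]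
    rw [Finset.sum_comm]
    have : ∀ i : Fin r, ∑ m : Fin r, C (d m) * (C (μ ^ (m : ℕ)) * f) ^ (q ^ (i : ℕ))
        = f ^ (q ^ (i : ℕ)) * C (if i = ⟨0, by omega⟩ then 1 else 0) := by
      intro i
      rw [← hd i, map_sum, Finset.mul_sum]
      apply Finset.sum_congr rfl
      intro m _
      rw [C_mul, mul_pow, ← C_pow, ← pow_mul, ← pow_mul, mul_comm (m : ℕ)]; ring
    simp_rw [this]
    rw [Finset.sum_eq_single ⟨0, by omega⟩]
    · simp
    · intro b _ hb; simp [hb]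
    · simp
  have hpm : ((p - 1 : ℕ) : F[X]) = C (-1) := by
    rw [Nat.cast_sub (by omega), CharP.cast_eq_zero F[X] p]; simp
  have main : f = ∑ m : Fin r, ∑ n : Fin (σ + 1),
      C (-(d m * c n)) * (1 + C (ζ ^ (n : ℕ)) * (C (μ ^ (m : ℕ)) * f)) ^ K := by
    conv_lhs => rw [← step2]
    apply Finset.sum_congr rfl
    intro m _
    have h := step1 (C (μ ^ (m : ℕ)) * f)
    rw [hpm] at h
    have h' : ∑ i ∈ Finset.range r, (C (μ ^ (m : ℕ)) * f) ^ (q ^ i) =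
        C (-1) * ∑ n : Fin (σ + 1), C (c n) * (1 + C (ζ ^ (n : ℕ)) * (C (μ ^ (m : ℕ)) * f)) ^ K := by
      rw [h]; simp
    rw [h', Finset.mul_sum, Finset.mul_sum]
    apply Finset.sum_congr rfl
    intro n _
    simp only [C_neg, C_mul, C_1]; ring
  have hroot : ∀ x : F, ∃ z : F, z ^ (p ^ r - 1) = x := fun x =>
    IsAlgClosed.exists_pow_nat_eq x hkpos
  choose ρ hρ using hroot
  refine ⟨fun t => C (ρ (-(d (finProdFinEquiv.symm t).1 * c (finProdFinEquiv.symm t).2))) *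
    (1 + C (ζ ^ ((finProdFinEquiv.symm t).2 : ℕ)) *
      (C (μ ^ ((finProdFinEquiv.symm t).1 : ℕ)) * f)) ^ M, ?_⟩
  rw [← finProdFinEquiv.sum_comp]
  simp only [Equiv.symm_apply_apply]
  rw [Fintype.sum_prod_type]
  conv_lhs => rw [main]
  apply Finset.sum_congr rfl
  intro m _
  apply Finset.sum_congr rfl
  intro n _
  rw [mul_pow, ← C_pow, hρ, ← pow_mul, mul_comm M, ← hM]

end WaringHelpers

theorem waring_asymptotic (F : Type*) [Field F] [IsAlgClosed F]
    (p : ℕ) [Fact p.Prime] [CharP F p] (hp : 2 < p) (ε : ℝ) (hε : 0 < ε) :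
    ∃ C : ℝ, 0 < C ∧ ∃ R : ℕ, ∀ r : ℕ, R ≤ r →
      waring F (p ^ r - 1) ≤ ((⌊C * (r : ℝ) ^ ((2 + ε) * Real.log p)⌋₊ : ℕ) : ℕ∞) := by
  refine ⟨p, by exact_mod_cast (by omega : 0 < p), 1, fun r hr => ?_⟩
  have h1 : waring F (p ^ r - 1) ≤ ((r * (r * (p - 1) + 1) : ℕ) : ℕ∞) :=
    sInf_le ⟨_, rfl, fun f => wa_key F p r hr f⟩
  refine h1.trans ?_
  rw [Nat.cast_le]
  apply Nat.le_floor
  have hr1 : (1 : ℝ) ≤ r := by exact_mod_cast hr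
  have hlog : 1 ≤ Real.log p := by
    rw [Real.le_log_iff_exp_le (by exact_mod_cast (by omega : 0 < p))]
    have h3 : (3 : ℝ) ≤ p := by exact_mod_cast hp
    linarith [Real.exp_one_lt_d9]
  have h2 : (r : ℝ) ^ 2 ≤ (r : ℝ) ^ ((2 + ε) * Real.log p) := by
    rw [← Real.rpow_natCast]
    apply Real.rpow_le_rpow_of_exponent_le hr1
    push_cast
    nlinarith
  have h4 : r * (r * (p - 1) + 1) ≤ p * r ^ 2 := by
    obtain ⟨e, rfl⟩ : ∃ e, p = e + 1 := ⟨p - 1, by omega⟩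
    simp only [Nat.add_sub_cancel]
    nlinarith
  calc ((r * (r * (p - 1) + 1) : ℕ) : ℝ) ≤ ((p * r ^ 2 : ℕ) : ℝ) := by exact_mod_cast h4
    _ = p * (r : ℝ) ^ 2 := by push_cast; ring
    _ ≤ _ := by gcongr
end
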